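/- arXiv:1904.04988 — 3 statements merged into one kernel-verified Lean document; each statement's English description precedes it below -/
import Mathlib

section
/- The fiber cone F(I) = T/J is a hypersurface ring: there exists a nonzero polynomial f ∈ T with f not a unit such that J is the principal ideal generated by f, i.e. J = (f). -/
open MvPolynomial

/-- exponent vector of the evaluation of the monomial `z^c`. -/
noncomputable def EE {n : ℕ} (a b : Fin n → ℕ) (c : Fin (n + 1) →₀ ℕ) : Fin n →₀ ℕ :=
  Finsupp.equivFunOnFinite.symm (fun i => a i * c i.castSucc + b i * c (Fin.last n))

lemma EE_apply {n : ℕ} (a b : Fin n → ℕ) (c : Fin (n + 1) →₀ ℕ) (i : Fin n) :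
    EE a b c i = a i * c i.castSucc + b i * c (Fin.last n) := rfl

lemma EE_add {n : ℕ} (a b : Fin n → ℕ) (c c' : Fin (n + 1) →₀ ℕ) :
    EE a b (c + c') = EE a b c + EE a b c' := by
  ext i; simp [EE_apply]; ring

lemma EE_zero {n : ℕ} (a b : Fin n → ℕ) : EE a b 0 = 0 := by
  ext i; simp [EE_apply]

lemma EE_smul {n : ℕ} (a b : Fin n → ℕ) (m : ℕ) (c : Fin (n + 1) →₀ ℕ) :
    EE a b (m • c) = m • EE a b c := by
  ext i; simp [EE_apply]; ring

section
variable {K : Type*} [Field K] {n : ℕ} {a b : Fin n → ℕ}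
    {I mm : Ideal (MvPolynomial (Fin n) K)}
    {u : Fin (n + 1) → MvPolynomial (Fin n) K}

lemma u_eq (hu : ∀ i : Fin n, u i.castSucc = X i ^ a i)
    (hulast : u (Fin.last n) = ∏ i, X i ^ b i) (i : Fin (n+1)) :
    u i = monomial (EE a b (Finsupp.single i 1)) 1 := by
  refine Fin.lastCases ?_ (fun i => ?_) i
  · rw [hulast, MvPolynomial.monomial_eq, Finsupp.prod_fintype _ _ (by simp)]
    simp [EE_apply, Finsupp.single_apply]
  · rw [hu, X_pow_eq_monomial]
    congr 2
    ext j
    by_cases h : i = j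
    · subst h; simp [EE_apply]
    · have : i.castSucc ≠ j.castSucc := by simpa using h
      simp [EE_apply, Finsupp.single_apply, h]

lemma aeval_mon (hu : ∀ i : Fin n, u i.castSucc = X i ^ a i)
    (hulast : u (Fin.last n) = ∏ i, X i ^ b i) (c : Fin (n+1) →₀ ℕ) (r : K) :
    aeval u (monomial c r) = monomial (EE a b c) r := by
  induction c using Finsupp.induction_linear generalizing r with
  | zero => simp [EE_zero, aeval_monomial, MvPolynomial.algebraMap_eq]
  | add f g hf hg =>
    rw [← mul_one r, ← monomial_mul, map_mul, hf, hg, monomial_mul, EE_add]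
  | single i m =>
    rw [aeval_monomial, Finsupp.prod_single_index (by simp), u_eq hu hulast,
      MvPolynomial.algebraMap_eq, monomial_pow, C_mul_monomial]
    rw [← EE_smul]
    simp

lemma I_pow_le (hu : ∀ i : Fin n, u i.castSucc = X i ^ a i)
    (hulast : u (Fin.last n) = ∏ i, X i ^ b i) (hI : I = Ideal.span (Set.range u)) (d : ℕ) :
    I ^ d ≤ Ideal.span ((fun s => monomial s (1:K)) '' (EE a b '' {c | c.degree = d})) := by
  induction d with
  | zero =>
    intro x _
    rw [mem_ideal_span_monomial_image]
    intro xi _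
    exact ⟨0, ⟨0, by simp, EE_zero a b⟩, bot_le⟩
  | succ d ih =>
    rw [pow_succ]
    refine (Ideal.mul_mono_left ih).trans ?_
    rw [hI, Ideal.span_mul_span', Ideal.span_le]
    rintro _ ⟨_, ⟨_, ⟨c, hc, rfl⟩, rfl⟩, _, ⟨i, rfl⟩, rfl⟩
    refine Ideal.subset_span ⟨_, ⟨c + Finsupp.single i 1, ?_, rfl⟩, ?_⟩
    · simp only [Set.mem_ofPred_eq] at hc ⊢
      simp [hc]
    · simp [u_eq hu hulast i, EE_add]

lemma mem_mI (hu : ∀ i : Fin n, u i.castSucc = X i ^ a i)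
    (hulast : u (Fin.last n) = ∏ i, X i ^ b i) (hI : I = Ideal.span (Set.range u))
    (hmm : mm = Ideal.span (Set.range (X : Fin n → MvPolynomial (Fin n) K))) (d : ℕ)
    (p : MvPolynomial (Fin n) K) (hp : p ∈ mm * I ^ d) (m : Fin n →₀ ℕ) (hm : m ∈ p.support) :
    ∃ c : Fin (n+1) →₀ ℕ, c.degree = d ∧ EE a b c ≤ m ∧ EE a b c ≠ m := by
  have h : mm * I ^ d ≤ Ideal.span ((fun s => monomial s (1:K)) ''
      {s | ∃ i c, s = Finsupp.single i 1 + EE a b c ∧ c.degree = d}) := by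
    refine (Ideal.mul_mono_right (I_pow_le hu hulast hI d)).trans ?_
    rw [hmm, Ideal.span_mul_span', Ideal.span_le]
    rintro _ ⟨_, ⟨i, rfl⟩, _, ⟨_, ⟨c, hc, rfl⟩, rfl⟩, rfl⟩
    refine Ideal.subset_span ⟨_, ⟨i, c, rfl, hc⟩, ?_⟩
    simp [X, monomial_mul]
  obtain ⟨s, ⟨i, c, rfl, hc⟩, hs⟩ := mem_ideal_span_monomial_image.1 (h hp) m hm
  refine ⟨c, hc, le_trans (by simp) hs, ?_⟩
  rintro rfl
  have := hs i
  simp at this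

lemma mon_mem_mI (hu : ∀ i : Fin n, u i.castSucc = X i ^ a i)
    (hulast : u (Fin.last n) = ∏ i, X i ^ b i) (hI : I = Ideal.span (Set.range u))
    (hmm : mm = Ideal.span (Set.range (X : Fin n → MvPolynomial (Fin n) K))) 
    (c c' : Fin (n+1) →₀ ℕ) (h : EE a b c' ≤ EE a b c) (hne : EE a b c' ≠ EE a b c) :
    (monomial (EE a b c) (1:K)) ∈ mm * I ^ c'.degree := by
  have h1 : monomial (EE a b c') (1:K) ∈ I ^ c'.degree := by
    rw [← aeval_mon hu hulast, aeval_monomial, Finsupp.prod_fintype _ _ (by simp),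
      Finsupp.degree_eq_sum, ← Finset.prod_pow_eq_pow_sum, map_one, one_mul]
    refine Ideal.prod_mem_prod fun i _ => Ideal.pow_mem_pow ?_ _
    rw [hI]; exact Ideal.subset_span ⟨i, rfl⟩
  have h2 : monomial (EE a b c - EE a b c') (1:K) ∈ mm := by
    rw [hmm, ← Set.image_univ, mem_ideal_span_X_image]
    intro m hm
    have hm' : m = EE a b c - EE a b c' := by
      simpa using support_monomial_subset hm
    subst hm'
    by_contra hcon
    push Not at hcon
    apply hne
    ext i
    have h1 := hcon i (Set.mem_univ i)
    have h2 := h i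
    simp only [Finsupp.coe_tsub, Pi.sub_apply] at h1
    omega
  have := Ideal.mul_mem_mul h2 h1
  rwa [monomial_mul, tsub_add_cancel_of_le h, one_mul] at this

lemma division (L M : Fin (n+1) →₀ ℕ) (ε : K) (μ : (Fin (n+1) →₀ ℕ) → ℕ)
    (hε : ε = 0 ∨ ∀ c, L ≤ c → μ (c - L + M) < μ c) (f : MvPolynomial (Fin (n+1)) K) :
    ∃ q r : MvPolynomial (Fin (n+1)) K, f = q * (monomial L 1 - monomial M ε) + r ∧
      ∀ c ∈ r.support, ¬ L ≤ c := by
  classical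
  have key : ∀ N : ℕ, ∀ c : Fin (n+1) →₀ ℕ, μ c = N → ∀ t : K,
      ∃ q r : MvPolynomial (Fin (n+1)) K,
      monomial c t = q * (monomial L 1 - monomial M ε) + r ∧ ∀ c ∈ r.support, ¬ L ≤ c := by
    intro N
    induction N using Nat.strong_induction_on with
    | _ N ih =>
      intro c hc t
      by_cases hL : L ≤ c
      · have e : monomial c t = monomial (c - L) t * (monomial L 1 - monomial M ε)
            + monomial (c - L + M) (t * ε) := by
          rw [mul_sub, monomial_mul, monomial_mul, tsub_add_cancel_of_le hL]
          simp
        rcases hε with h0 | h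
        · refine ⟨monomial (c - L) t, 0, ?_, by simp⟩
          rw [e, h0]; simp
        · obtain ⟨q, r, h1, h2⟩ := ih _ (hc ▸ h c hL) _ rfl (t * ε)
          refine ⟨monomial (c - L) t + q, r, ?_, h2⟩
          rw [e, h1]; ring
      · refine ⟨0, monomial c t, by simp, fun c' hc' => ?_⟩
        have : c' = c := by simpa using support_monomial_subset hc'
        rwa [this]
  induction f using MvPolynomial.induction_on' with
  | monomial c t => exact key _ c rfl t
  | add p q hp hq =>
    obtain ⟨q1, r1, h1, h1'⟩ := hp
    obtain ⟨q2, r2, h2, h2'⟩ := hq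
    refine ⟨q1 + q2, r1 + r2, by rw [h1, h2]; ring, fun c hc => ?_⟩
    rcases Finset.mem_union.1 (support_add hc) with h | h
    exacts [h1' c h, h2' c h]

lemma std_zero (hu : ∀ i : Fin n, u i.castSucc = X i ^ a i)
    (hulast : u (Fin.last n) = ∏ i, X i ^ b i) (hI : I = Ideal.span (Set.range u))
    (hmm : mm = Ideal.span (Set.range (X : Fin n → MvPolynomial (Fin n) K)))
    (L : Fin (n+1) →₀ ℕ)
    (H1 : ∀ c c' : Fin (n+1) →₀ ℕ, ¬ L ≤ c → c'.degree = c.degree → EE a b c' ≤ EE a b c →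
      EE a b c' = EE a b c)
    (H2 : ∀ c c' : Fin (n+1) →₀ ℕ, ¬ L ≤ c → ¬ L ≤ c' → c'.degree = c.degree →
      EE a b c' = EE a b c → c' = c)
    (r : MvPolynomial (Fin (n+1)) K) (hr : ∀ c ∈ r.support, ¬ L ≤ c)
    (hJ : ∀ d : ℕ, aeval u (homogeneousComponent d r) ∈ mm * I ^ d) : r = 0 := by
  classical
  by_contra hne
  obtain ⟨c, hc⟩ := support_nonempty.2 hne
  have key : coeff (EE a b c) (aeval u (homogeneousComponent c.degree r)) = coeff c r := by
    rw [homogeneousComponent_apply, map_sum, coeff_sum]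
    simp only [aeval_mon hu hulast, coeff_monomial]
    rw [Finset.sum_eq_single c]
    · simp
    · intro c' hc' hcc
      rw [Finset.mem_filter] at hc'
      rw [if_neg]
      intro h
      exact hcc (H2 c c' (hr c hc) (hr c' hc'.1) hc'.2 h)
    · intro h
      exact (h (Finset.mem_filter.2 ⟨hc, rfl⟩)).elim
  obtain ⟨c', h1, h2, h3⟩ := mem_mI hu hulast hI hmm _ _ (hJ c.degree) (EE a b c) (by
    rw [mem_support_iff, key]; exact mem_support_iff.1 hc)
  exact h3 (H1 c c' (hr c hc) h1 h2)

lemma core (hu : ∀ i : Fin n, u i.castSucc = X i ^ a i)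
    (hulast : u (Fin.last n) = ∏ i, X i ^ b i) (hI : I = Ideal.span (Set.range u))
    (hmm : mm = Ideal.span (Set.range (X : Fin n → MvPolynomial (Fin n) K)))
    (J : Ideal (MvPolynomial (Fin (n + 1)) K))
    (hJ : ∀ f : MvPolynomial (Fin (n + 1)) K,
      f ∈ J ↔ ∀ d : ℕ, aeval u (homogeneousComponent d f) ∈ mm * I ^ d)
    (L M : Fin (n+1) →₀ ℕ) (ε : K) (μ : (Fin (n+1) →₀ ℕ) → ℕ)
    (hε : ε = 0 ∨ ∀ c, L ≤ c → μ (c - L + M) < μ c)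
    (hL : L ≠ 0) (hM : M ≠ L) (hLM : M.degree = L.degree)
    (H1 : ∀ c c' : Fin (n+1) →₀ ℕ, ¬ L ≤ c → c'.degree = c.degree → EE a b c' ≤ EE a b c →
      EE a b c' = EE a b c)
    (H2 : ∀ c c' : Fin (n+1) →₀ ℕ, ¬ L ≤ c → ¬ L ≤ c' → c'.degree = c.degree →
      EE a b c' = EE a b c → c' = c)
    (hg : monomial (EE a b L) 1 - monomial (EE a b M) ε ∈ mm * I ^ L.degree) :
    ∃ f : MvPolynomial (Fin (n + 1)) K, f ≠ 0 ∧ ¬ IsUnit f ∧ J = Ideal.span {f} := by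
  classical
  have gJ : (monomial L 1 - monomial M ε : MvPolynomial (Fin (n + 1)) K) ∈ J := by
    rw [hJ]
    intro d
    have hh : (monomial L 1 - monomial M ε : MvPolynomial (Fin (n + 1)) K).IsHomogeneous
        L.degree :=
      (isHomogeneous_monomial _ rfl).sub (isHomogeneous_monomial _ hLM)
    rw [homogeneousComponent_of_mem hh]
    split_ifs with h
    · subst h
      rw [map_sub, aeval_mon hu hulast, aeval_mon hu hulast]
      exact hg
    · simp
  refine ⟨monomial L 1 - monomial M ε, ?_, ?_, ?_⟩
  · intro h
    have := congrArg (coeff L) h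
    simp [coeff_monomial, hM] at this
  · intro h
    have h1 : (1 : MvPolynomial (Fin (n + 1)) K) ∈ J := by
      rw [Ideal.eq_top_of_isUnit_mem _ gJ h]; trivial
    refine one_ne_zero (std_zero hu hulast hI hmm L H1 H2 1 ?_ ((hJ 1).1 h1))
    intro c hc hLc
    have : c = 0 := by
      have := support_monomial_subset (R := K) (s := 0) (a := 1) hc
      simpa using this
    subst this
    exact hL (le_antisymm hLc bot_le)
  · refine le_antisymm (fun f hf => ?_) ((Ideal.span_singleton_le_iff_mem _).2 gJ)
    obtain ⟨q, r, h1, h2⟩ := division L M ε μ hε f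
    have hrJ : r ∈ J := by
      have : r = f - q * (monomial L 1 - monomial M ε) := by rw [h1]; ring
      rw [this]
      exact J.sub_mem hf (J.mul_mem_left _ gJ)
    have := std_zero hu hulast hI hmm L H1 H2 r h2 ((hJ r).1 hrJ)
    rw [h1, this, add_zero]
    exact Ideal.mul_mem_left _ _ (Ideal.mem_span_singleton_self _)

end

/-- first case of the dichotomy. -/
def PP {n : ℕ} (a b : Fin n → ℕ) (k : ℕ) : Prop :=
  1 ≤ k ∧ ∃ w : Fin n → ℕ, ∑ i, w i ≤ k ∧ ∀ i, k * b i ≤ a i * w i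

/-- second case of the dichotomy. -/
def QQ {n : ℕ} (a b : Fin n → ℕ) (k : ℕ) : Prop :=
  1 ≤ k ∧ ∃ w : Fin n → ℕ, k ≤ ∑ i, w i ∧ ∀ i, a i * w i ≤ k * b i

lemma PQ {n : ℕ} (a b : Fin n → ℕ) (ha : ∀ i, 0 < a i) : (∃ k, PP a b k) ∨ ∃ k, QQ a b k := by
  classical
  have h : ∀ i, a i * (b i * ∏ j ∈ Finset.univ.erase i, a j) = (∏ j, a j) * b i := by
    intro i
    rw [← Finset.mul_prod_erase _ _ (Finset.mem_univ i)]; ring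
  have hA : 1 ≤ ∏ j, a j := Finset.prod_pos fun i _ => ha i
  rcases le_total (∑ i, b i * ∏ j ∈ Finset.univ.erase i, a j) (∏ j, a j) with h1 | h1
  · exact Or.inl ⟨_, hA, _, h1, fun i => (h i).ge⟩
  · exact Or.inr ⟨_, hA, _, h1, fun i => (h i).le⟩

lemma deg_eq {n : ℕ} (c : Fin (n+1) →₀ ℕ) :
    c.degree = ∑ i : Fin n, c i.castSucc + c (Fin.last n) := by
  rw [Finsupp.degree_eq_sum, Fin.sum_univ_castSucc]

lemma case_eq {n : ℕ} (a b : Fin n → ℕ) (ha : ∀ i, 0 < a i) (c c' : Fin (n+1) →₀ ℕ)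
    (hd : c'.degree = c.degree) (h : EE a b c' ≤ EE a b c)
    (hl : c (Fin.last n) = c' (Fin.last n)) : c' = c := by
  rw [deg_eq, deg_eq, hl] at hd
  have h1 : ∀ i : Fin n, c' i.castSucc ≤ c i.castSucc := by
    intro i
    have := h i
    rw [EE_apply, EE_apply, hl] at this
    exact Nat.le_of_mul_le_mul_left (Nat.le_of_add_le_add_right this) (ha i)
  have h2 := (Finset.sum_eq_sum_iff_of_le (s := Finset.univ) (fun i _ => h1 i)).1 (by omega)
  ext i
  refine Fin.lastCases hl.symm (fun i => h2 i (Finset.mem_univ i)) i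

/-- `j < j'` -/
lemma case_lt {n : ℕ} (a b : Fin n → ℕ) (ha : ∀ i, 0 < a i) (c c' : Fin (n+1) →₀ ℕ)
    (hd : c'.degree = c.degree) (h : EE a b c' ≤ EE a b c)
    (hl : c (Fin.last n) < c' (Fin.last n)) :
    ∃ k, PP a b k ∧ ∀ i : Fin n, k * b i ≤ a i * c i.castSucc := by
  rw [deg_eq, deg_eq] at hd
  obtain ⟨k, hk⟩ := Nat.exists_eq_add_of_lt hl
  have h0 : ∀ i : Fin n, (k + 1) * b i + a i * c' i.castSucc ≤ a i * c i.castSucc := by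
    intro i
    have := h i
    rw [EE_apply, EE_apply, hk] at this
    nlinarith
  have h1 : ∀ i : Fin n, c' i.castSucc ≤ c i.castSucc := fun i =>
    Nat.le_of_mul_le_mul_left (le_trans (Nat.le_add_left _ _) (h0 i)) (ha i)
  refine ⟨k + 1, ⟨by omega, fun i => c i.castSucc - c' i.castSucc, ?_, fun i => ?_⟩, fun i => ?_⟩
  · rw [Finset.sum_tsub_distrib _ (fun i _ => h1 i)]
    omega
  · rw [Nat.mul_sub]
    have := h0 i
    omega
  · have := h0 i
    omega

/-- `j > j'` -/
lemma case_gt {n : ℕ} (a b : Fin n → ℕ) (c c' : Fin (n+1) →₀ ℕ)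
    (hd : c'.degree = c.degree) (h : EE a b c' ≤ EE a b c)
    (hl : c' (Fin.last n) < c (Fin.last n)) :
    ∃ k : ℕ, 1 ≤ k ∧ c (Fin.last n) = c' (Fin.last n) + k ∧
      ∑ i : Fin n, ((c' i.castSucc : ℤ) - c i.castSucc) = k ∧
      ∀ i : Fin n, (a i : ℤ) * ((c' i.castSucc : ℤ) - c i.castSucc) ≤ k * b i := by
  rw [deg_eq, deg_eq] at hd
  obtain ⟨k, hk⟩ := Nat.exists_eq_add_of_lt hl
  refine ⟨k + 1, by omega, by omega, ?_, fun i => ?_⟩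
  · rw [Finset.sum_sub_distrib]
    zify at hd hk ⊢
    linarith
  · have := h i
    rw [EE_apply, EE_apply, hk] at this
    zify at this ⊢
    nlinarith

lemma PP_two {n : ℕ} (hn : 2 ≤ n) (a b : Fin n → ℕ) (hb : ∀ i, 0 < b i) (k : ℕ)
    (h : PP a b k) : 2 ≤ k := by
  obtain ⟨h1, w, h2, h3⟩ := h
  have : ∀ i, 1 ≤ w i := by
    intro i
    by_contra hc
    have h0 : w i = 0 := by omega
    have := h3 i
    rw [h0, mul_zero] at this
    have := Nat.mul_pos h1 (hb i)
    omega
  have := Finset.sum_le_sum (s := Finset.univ) (fun i _ => this i)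
  simp at this
  omega

lemma PP_min {n : ℕ} (hn : 2 ≤ n) (a b : Fin n → ℕ) (ha : ∀ i, 0 < a i) (hb : ∀ i, 0 < b i)
    (hP : ∃ k, PP a b k) :
    ∃ k : ℕ, 2 ≤ k ∧ ∃ w : Fin n → ℕ, ∑ i, w i = k ∧ (∀ i, k * b i ≤ a i * w i) ∧
      ∀ k', PP a b k' → ∀ (c : Fin n → ℕ), (∀ i, k' * b i ≤ a i * c i) → ∀ i, w i ≤ c i := by
  classical
  obtain ⟨h1, w0, h2, h3⟩ := Nat.find_spec hP
  have hmin : ∀ k', PP a b k' → Nat.find hP ≤ k' := fun k' h => Nat.find_min' hP h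
  have hk2 := PP_two hn a b hb _ (Nat.find_spec hP)
  generalize Nat.find hP = k at *
  have hex : ∀ i, ∃ x, k * b i ≤ a i * x := fun i => ⟨_, h3 i⟩
  have hw : ∀ i, k * b i ≤ a i * Nat.find (hex i) := fun i => Nat.find_spec (hex i)
  have hle : ∑ i, Nat.find (hex i) ≤ k :=
    (Finset.sum_le_sum fun i _ => Nat.find_min' (hex i) (h3 i)).trans h2
  refine ⟨k, hk2, fun i => Nat.find (hex i), ?_, hw, ?_⟩
  · by_contra hne
    dsimp only at hne
    have : PP a b (k - 1) := ⟨by omega, fun i => Nat.find (hex i),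
      Nat.le_sub_one_of_lt (lt_of_le_of_ne hle hne), fun i =>
      (Nat.mul_le_mul_right _ (Nat.sub_le k 1)).trans (hw i)⟩
    have := hmin _ this
    omega
  · intro k' hk' c hc i
    exact Nat.find_min' (hex i) ((Nat.mul_le_mul_right _ (hmin _ hk')).trans (hc i))

/-- exponent `(w, j)` -/
noncomputable def mk {n : ℕ} (w : Fin n → ℕ) (j : ℕ) : Fin (n+1) →₀ ℕ :=
  Finsupp.equivFunOnFinite.symm (Fin.snoc (α := fun _ => ℕ) w j)

@[simp] lemma mk_last {n : ℕ} (w : Fin n → ℕ) (j : ℕ) : mk w j (Fin.last n) = j := by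
  simp [mk]
@[simp] lemma mk_cast {n : ℕ} (w : Fin n → ℕ) (j : ℕ) (i : Fin n) : mk w j i.castSucc = w i := by
  simp [mk]

lemma le_mk {n : ℕ} (w : Fin n → ℕ) (j : ℕ) (c : Fin (n+1) →₀ ℕ) :
    mk w j ≤ c ↔ (∀ i : Fin n, w i ≤ c i.castSucc) ∧ j ≤ c (Fin.last n) := by
  rw [Finsupp.le_def, Fin.forall_fin_succ']
  simp

theorem stmt_4 {K : Type*} [Field K] (n : ℕ) (hn : 2 ≤ n)
    (a b : Fin n → ℕ) (hba : ∀ i, b i < a i) (hb : ∀ i, 0 < b i)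
    (I mm : Ideal (MvPolynomial (Fin n) K))
    (hI : I = Ideal.span (Set.range (fun i => (X i : MvPolynomial (Fin n) K) ^ a i) ∪
      {∏ i, (X i : MvPolynomial (Fin n) K) ^ b i}))
    (hmm : mm = Ideal.span (Set.range (X : Fin n → MvPolynomial (Fin n) K)))
    (u : Fin (n + 1) → MvPolynomial (Fin n) K)
    (hu : ∀ i : Fin n, u i.castSucc = X i ^ a i)
    (hulast : u (Fin.last n) = ∏ i, X i ^ b i)
    (J : Ideal (MvPolynomial (Fin (n + 1)) K))
    (hJ : ∀ f : MvPolynomial (Fin (n + 1)) K,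
      f ∈ J ↔ ∀ d : ℕ, aeval u (homogeneousComponent d f) ∈ mm * I ^ d)
    :
    ∃ f : MvPolynomial (Fin (n + 1)) K, f ≠ 0 ∧ ¬ IsUnit f ∧ J = Ideal.span {f} := by
  classical
  have ha : ∀ i, 0 < a i := fun i => lt_of_le_of_lt (Nat.zero_le _) (hba i)
  have hI' : I = Ideal.span (Set.range u) := by
    rw [hI]
    congr 1
    ext p
    simp only [Set.mem_union, Set.mem_range, Set.mem_singleton_iff, Fin.exists_fin_succ', hu,
      hulast, eq_comm]
  by_cases hP : ∃ k, PP a b k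
  · obtain ⟨k, hk2, w, hws, hw, hmin⟩ := PP_min hn a b ha hb hP
    have dL : (mk w 0).degree = k := by rw [deg_eq]; simp [hws]
    have dM : (mk (n := n) (fun _ => 0) k).degree = k := by rw [deg_eq]; simp
    have hle : EE a b (mk (fun _ => 0) k) ≤ EE a b (mk w 0) := by
      intro i
      have := hw i
      simp only [EE_apply, mk_last, mk_cast]
      linarith
    have HH : ∀ c c' : Fin (n+1) →₀ ℕ, ¬ mk w 0 ≤ c → c'.degree = c.degree →
        EE a b c' ≤ EE a b c → c' (Fin.last n) ≤ c (Fin.last n) := by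
      intro c c' hc hd he
      by_contra hlt
      obtain ⟨k', hk', h'⟩ := case_lt a b ha c c' hd he (by omega)
      exact hc ((le_mk _ _ _).2 ⟨fun i => hmin k' hk' (fun i => c i.castSucc) h' i, Nat.zero_le _⟩)
    refine core hu hulast hI' hmm J hJ (mk w 0) (mk (fun _ => 0) k)
      (if EE a b (mk (fun _ => 0) k) = EE a b (mk w 0) then 1 else 0)
      (fun c => ∑ i : Fin n, c i.castSucc) ?_ ?_ ?_ ?_ ?_ ?_ ?_
    · right
      intro c hc
      have hc' := ((le_mk _ _ _).1 hc).1
      simp only [Finsupp.add_apply, Finsupp.tsub_apply, mk_cast, add_zero]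
      rw [Finset.sum_tsub_distrib _ (fun i _ => hc' i), hws]
      have := Finset.sum_le_sum (s := Finset.univ) (fun i _ => hc' i)
      omega
    · intro h; rw [h] at dL; simp at dL; omega
    · intro h
      have := DFunLike.congr_fun h (Fin.last n)
      simp at this
      omega
    · rw [dL, dM]
    · intro c c' hc hd he
      rcases lt_or_eq_of_le (HH c c' hc hd he) with hl | hl
      · obtain ⟨k', h1, h2, h3, h4⟩ := case_gt a b c c' hd he hl
        have h5 : ∀ i : Fin n, (k:ℤ) * ((c' i.castSucc : ℤ) - c i.castSucc) ≤ k' * w i := by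
          intro i
          have e1 := h4 i
          have e2 : (k : ℤ) * b i ≤ a i * w i := by exact_mod_cast hw i
          have e3 : (0:ℤ) < a i := by exact_mod_cast ha i
          refine le_of_mul_le_mul_left ?_ e3
          have f1 := mul_le_mul_of_nonneg_left e1 (show (0:ℤ) ≤ k by positivity)
          have f2 := mul_le_mul_of_nonneg_left e2 (show (0:ℤ) ≤ k' by positivity)
          linarith
        have h6 := (Finset.sum_eq_sum_iff_of_le (s := Finset.univ) (fun i _ => h5 i)).1 (by
          rw [← Finset.mul_sum, ← Finset.mul_sum, h3]
          have : ∑ i, (w i : ℤ) = k := by exact_mod_cast hws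
          rw [this]; ring)
        ext i
        have g1 := h6 i (Finset.mem_univ i)
        have e1 := h4 i
        have e2 : (k : ℤ) * b i ≤ a i * w i := by exact_mod_cast hw i
        have f2 := mul_le_mul_of_nonneg_left e2 (show (0:ℤ) ≤ k' by positivity)
        have e3 : (k' : ℤ) * b i ≤ a i * ((c' i.castSucc : ℤ) - c i.castSucc) := by
          refine le_of_mul_le_mul_left ?_ (show (0:ℤ) < k by exact_mod_cast (by omega : 0 < k))
          calc (k:ℤ) * (k' * b i) = k' * (k * b i) := by ring
            _ ≤ _ := f2
            _ = a i * (k' * w i) := by ring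
            _ = _ := by rw [← g1]; ring
        have e4 := le_antisymm e1 e3
        rw [EE_apply, EE_apply, h2]
        zify
        linarith
      · rw [case_eq a b ha c c' hd he hl.symm]
    · intro c c' hc hc' hd he
      exact case_eq a b ha c c' hd he.le
        (le_antisymm (HH c' c hc' hd.symm he.ge) (HH c c' hc hd he.le))
    · split_ifs with h
      · rw [h]; simp
      · rw [map_zero, sub_zero, dL]
        have := mon_mem_mI hu hulast hI' hmm _ _ hle h
        rwa [dM] at this
  · have hQ := (PQ a b ha).resolve_left hP
    obtain ⟨hk1, w0, hs0, hw0⟩ := Nat.find_spec hQ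
    have hmin : ∀ k', QQ a b k' → Nat.find hQ ≤ k' := fun k' h => Nat.find_min' hQ h
    generalize Nat.find hQ = k at *
    obtain ⟨w, hww, hws⟩ := Finsupp.exists_le_degree_eq (Finsupp.equivFunOnFinite.symm w0) k
      (by rw [Finsupp.degree_eq_sum]; simpa using hs0)
    rw [Finsupp.degree_eq_sum] at hws
    have hw : ∀ i, a i * w i ≤ k * b i := fun i =>
      (Nat.mul_le_mul_left _ (hww i)).trans (hw0 i)
    have dM : (mk w 0).degree = k := by rw [deg_eq]; simp [hws]
    have dL : (mk (n := n) (fun _ => 0) k).degree = k := by rw [deg_eq]; simp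
    have hle : EE a b (mk w 0) ≤ EE a b (mk (fun _ => 0) k) := by
      intro i
      have := hw i
      simp only [EE_apply, mk_last, mk_cast]
      linarith
    have hne : EE a b (mk w 0) ≠ EE a b (mk (fun _ => 0) k) := by
      intro h
      refine hP ⟨k, hk1, w, hws.le, fun i => ?_⟩
      have := DFunLike.congr_fun h i
      simp only [EE_apply, mk_last, mk_cast] at this
      linarith
    have HH : ∀ c c' : Fin (n+1) →₀ ℕ, ¬ mk (fun _ => 0) k ≤ c → c'.degree = c.degree →
        EE a b c' ≤ EE a b c → c' = c := by
      intro c c' hc hd he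
      rcases lt_trichotomy (c (Fin.last n)) (c' (Fin.last n)) with hl | hl | hl
      · obtain ⟨k', hk', _⟩ := case_lt a b ha c c' hd he hl
        exact absurd ⟨k', hk'⟩ hP
      · exact case_eq a b ha c c' hd he hl
      · obtain ⟨k', h1, h2, h3, h4⟩ := case_gt a b c c' hd he hl
        have : QQ a b k' := by
          refine ⟨h1, fun i => ((c' i.castSucc : ℤ) - c i.castSucc).toNat, ?_, fun i => ?_⟩
          · zify
            rw [← h3]
            exact Finset.sum_le_sum fun i _ => Int.self_le_toNat _
          · zify
            rcases le_total 0 ((c' i.castSucc : ℤ) - c i.castSucc) with h | h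
            · rw [Int.toNat_of_nonneg h]; exact h4 i
            · rw [Int.toNat_of_nonpos h]; simp; positivity
        have := hmin k' this
        exact absurd ((le_mk _ _ _).2 ⟨fun i => Nat.zero_le _, by omega⟩) hc
    refine core hu hulast hI' hmm J hJ (mk (fun _ => 0) k) (mk w 0) 0
      (fun _ => 0) (Or.inl rfl) ?_ ?_ ?_ ?_ ?_ ?_
    · intro h; rw [h] at dL; simp at dL; omega
    · intro h
      have := DFunLike.congr_fun h (Fin.last n)
      simp at this
      omega
    · rw [dL, dM]
    · intro c c' hc hd he
      rw [HH c c' hc hd he]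
    · intro c c' hc hc' hd he
      exact HH c c' hc hd he.le
    · rw [map_zero, sub_zero, dL]
      have := mon_mem_mI hu hulast hI' hmm _ _ hle hne
      rwa [dM] at this
end

section
/- The fiber cone F(I) = T/J has positive depth: there exists an element f of the ideal (z_1,z_2,z_3,z_4) of T whose image in T/J is a nonzerodivisor on T/J. -/
open MvPolynomial

theorem core_arg {K : Type*} [Field K] (s t : ℕ) (hst : t < s) (O D : ℕ → ℕ → ℕ → Prop)
    (h1 : ∀ d p q, D d p q → D (d+1) (p+s) (q+t))
    (h1' : ∀ d p q, D d p q → D (d+1) (p+t) (q+s))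
    (hO : ∀ d p q, O d p q → O (d+1) (p+t) (q+s))
    (h2 : ∀ d p q, O d p q → D (d+1) (p+s) (q+t) → D (d+1) (p+t) (q+s) → D d p q)
    (d : ℕ) (φ ψ : ℕ → ℕ → K) (hφ : ∀ p q, φ p q ≠ 0 → O d p q)
    (M : ℕ) (hM : ∀ p q, φ p q ≠ 0 → p ≤ M)
    (hψ : ∀ p q, ¬ D (d+1) p q → ψ p q = 0)
    (hrec : ∀ P Q, ψ P Q = (if s ≤ P ∧ t ≤ Q then φ (P-s) (Q-t) else 0)
      + (if t ≤ P ∧ s ≤ Q then φ (P-t) (Q-s) else 0)) :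
    ∀ p q, φ p q ≠ 0 → D d p q := by
  classical
  by_contra hcon
  push Not at hcon
  have hex : ∃ n, ∃ p q, n = M - p ∧ φ p q ≠ 0 ∧ ¬ D d p q := by
    obtain ⟨p, q, h⟩ := hcon
    exact ⟨_, p, q, rfl, h⟩
  obtain ⟨p, q, hn, hpq, hD⟩ := Nat.find_spec hex
  have hmax : ∀ p' q', φ p' q' ≠ 0 → p < p' → D d p' q' := by
    intro p' q' h hlt
    by_contra hd
    have := Nat.find_min' hex ⟨p', q', rfl, h, hd⟩
    have := hM _ _ h
    omega
  have hi : D (d+1) (p+s) (q+t) := by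
    by_contra hd
    have e := hψ _ _ hd
    rw [hrec, if_pos ⟨by omega, by omega⟩, Nat.add_sub_cancel, Nat.add_sub_cancel] at e
    split_ifs at e with hc
    · have hne : φ (p+s-t) (q+t-s) ≠ 0 := by
        intro h0; rw [h0, add_zero] at e; exact hpq e
      have := h1' _ _ _ (hmax _ _ hne (by omega))
      rw [Nat.sub_add_cancel (by omega), Nat.sub_add_cancel (by omega)] at this
      exact hd this
    · rw [add_zero] at e; exact hpq e
  have hii : ∀ N, O (d+N) (p+N*t) (q+N*s) ∧ ¬ D (d+N) (p+N*t) (q+N*s) ∧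
      D (d+N+1) (p+N*t+s) (q+N*s+t) := by
    intro N
    induction N with
    | zero => simpa using ⟨hφ _ _ hpq, hD, hi⟩
    | succ N ih =>
      obtain ⟨a1, a2, a3⟩ := ih
      have e1 : p + (N+1)*t = p + N*t + t := by ring
      have e2 : q + (N+1)*s = q + N*s + s := by ring
      rw [e1, e2]
      refine ⟨hO _ _ _ a1, fun h => a2 (h2 _ _ _ a1 a3 h), ?_⟩
      have := h1' _ _ _ a3
      convert this using 1 <;> ring
  have hiter : ∀ k d p q, D d p q → D (d+k) (p+k*s) (q+k*t) := by
    intro k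
    induction k with
    | zero => intro d p q h; simpa using h
    | succ k ih =>
      intro d p q h
      have := h1 _ _ _ (ih _ _ _ h)
      convert this using 1 <;> ring
  obtain ⟨δ, rfl⟩ : ∃ δ, s = t + δ := ⟨s - t, by omega⟩
  have hiii : ∀ k, ∃ P, P + k * δ = p ∧ φ P (q + k*δ) ≠ 0 := by
    intro k
    induction k with
    | zero => exact ⟨p, by simp, by simpa using hpq⟩
    | succ k ih =>
      obtain ⟨P, hP, hne⟩ := ih
      have hd : ¬ D (d+1) (P+t) (q+k*δ+(t+δ)) := by
        intro h
        apply (hii (k+1)).2.1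
        have := hiter k _ _ _ h
        convert this using 1
        · ring
        · rw [← hP]; ring
        · ring
      have e := hψ _ _ hd
      rw [hrec, add_comm, if_pos ⟨by omega, by omega⟩, Nat.add_sub_cancel, Nat.add_sub_cancel] at e
      split_ifs at e with hc
      · refine ⟨P - δ, ?_, ?_⟩
        · rw [add_mul]; omega
        · intro h0
          rw [show P + t - (t+δ) = P - δ by omega,
            show q+k*δ+(t+δ)-t = q + (k+1)*δ by rw [add_mul]; omega, h0, add_zero] at e
          exact hne e
      · rw [add_zero] at e; exact (hne e).elim
  obtain ⟨P, hP, -⟩ := hiii (p+1)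
  have : p + 1 ≤ (p+1)*δ := Nat.le_mul_of_pos_right _ (by omega)
  omega

def OrdP (a b c d p q : ℕ) : Prop :=
  ∃ i j k l, i+j+k+l = d ∧ c*i+b*j+a*k ≤ p ∧ a*j+b*k+c*l ≤ q

def DeadP (a b c d p q : ℕ) : Prop :=
  ∃ i j k l, i+j+k+l = d ∧ c*i+b*j+a*k ≤ p ∧ a*j+b*k+c*l ≤ q ∧
    c*i+b*j+a*k + (a*j+b*k+c*l) < p + q

theorem dead_symm {a b c d p q : ℕ} (h : DeadP a b c d p q) : DeadP a b c d q p := by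
  obtain ⟨i, j, k, l, h1, h2, h3, h4⟩ := h
  exact ⟨l, k, j, i, by omega, by omega, by omega, by omega⟩

theorem dead_add0 {a b c d p q : ℕ} (h : DeadP a b c d p q) : DeadP a b c (d+1) (p+c) (q+0) := by
  obtain ⟨i, j, k, l, h1, h2, h3, h4⟩ := h
  exact ⟨i+1, j, k, l, by omega, by rw [mul_add]; omega, by omega, by rw [mul_add]; omega⟩

theorem dead_add1 {a b c d p q : ℕ} (h : DeadP a b c d p q) : DeadP a b c (d+1) (p+b) (q+a) := by
  obtain ⟨i, j, k, l, h1, h2, h3, h4⟩ := h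
  exact ⟨i, j+1, k, l, by omega, by rw [mul_add]; omega, by rw [mul_add]; omega,
    by rw [mul_add, mul_add]; omega⟩

/-- If `z₁ w` is dead and `w` is alive, then `a+b>c` and `z₃ ∣ w`. -/
theorem keyA {a b c i j k l : ℕ} (hab : a < b) (hbc : b < c) (he : c ≤ a + b)
    (h : DeadP a b c (i+j+k+l+1) (c*i+b*j+a*k+c) (a*j+b*k+c*l)) :
    DeadP a b c (i+j+k+l) (c*i+b*j+a*k) (a*j+b*k+c*l) ∨ (0 < k ∧ c < a + b) := by
  obtain ⟨i', j', k', l', h1, h2, h3, h4⟩ := h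
  by_cases hi : 0 < i'
  · left
    obtain ⟨i', rfl⟩ : ∃ r, i' = r+1 := ⟨i'-1, by omega⟩
    rw [mul_add] at h2 h4
    exact ⟨i', j', k', l', by omega, by omega, by omega, by omega⟩
  · right
    obtain rfl : i' = 0 := by omega
    by_contra hk
    obtain ⟨e, hBe⟩ : ∃ e, b + a = c + e := ⟨a+b-c, by omega⟩
    have hlin : k = 0 ∨ e = 0 := by
      by_contra hh
      exact hk ⟨by omega, by omega⟩
    zify at h1 h2 h3 h4 hab hbc hBe
    have hs : (e:ℤ)*(j'+k') < e*(j+k) := by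
      linear_combination h4 - (j'+k'-j-k : ℤ)*hBe - (c:ℤ)*h1
    have he0 : (0:ℤ) < e := by
      by_contra h
      have : (e:ℤ) = 0 := by omega
      rw [this] at hs
      simp at hs
    obtain rfl : k = 0 := by omega
    have hj : ((j':ℤ)+k') < j+(0:ℕ) := lt_of_mul_lt_mul_left hs he0.le
    push_cast at *
    have hll : (l:ℤ) + i + 1 < l' := by omega
    have hjj : (j:ℤ) = j'+k'+l'-l-i-1 := by omega
    rw [hjj] at h3
    nlinarith [mul_nonneg (show (0:ℤ) ≤ b - a by omega) (show (0:ℤ) ≤ k' by omega),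
      mul_pos (show (0:ℤ) < c - a by omega) (show (0:ℤ) < l' - l by omega),
      mul_nonneg (show (0:ℤ) ≤ a by omega) (show (0:ℤ) ≤ i + 1 by omega)]

/-- If `z₂ w` is dead and `w` is alive, then `z₄ ∣ w` (case `a+b<c`). -/
theorem keyB {a b c i j k l : ℕ} (hab : a < b) (he : a + b < c)
    (h : DeadP a b c (i+j+k+l+1) (c*i+b*j+a*k+b) (a*j+b*k+c*l+a)) :
    DeadP a b c (i+j+k+l) (c*i+b*j+a*k) (a*j+b*k+c*l) ∨ 0 < l := by
  obtain ⟨i', j', k', l', h1, h2, h3, h4⟩ := h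
  by_cases hi : 0 < j'
  · left
    obtain ⟨j', rfl⟩ : ∃ r, j' = r+1 := ⟨j'-1, by omega⟩
    rw [mul_add] at h2 h3 h4
    rw [mul_add] at h4
    exact ⟨i', j', k', l', by omega, by omega, by omega, by omega⟩
  · right
    obtain rfl : j' = 0 := by omega
    by_contra hk
    obtain rfl : l = 0 := by omega
    obtain ⟨e, rfl⟩ : ∃ e, c = a + b + e := ⟨c - a - b, by omega⟩
    have he0 : 0 < e := by omega
    zify at *
    have hs : (e:ℤ)*(i'+l') < e*i := by
      linear_combination h4 - (a+b:ℤ)*h1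
    have hj : ((i':ℤ)+l') < i := lt_of_mul_lt_mul_left hs he0.le
    have hll : (j:ℤ) + k + 1 < k' := by omega
    nlinarith [mul_pos (show (0:ℤ) < b by omega) (show (0:ℤ) < k' - (j+k+1) by omega),
      mul_pos (show (0:ℤ) < b - a by omega) (show (0:ℤ) < j + 1 by omega),
      mul_nonneg (show (0:ℤ) ≤ a + b + e by omega) (show (0:ℤ) ≤ l' by omega)]

theorem ord_cases {a b c d p q : ℕ} (h : OrdP a b c d p q) :
    DeadP a b c d p q ∨ ∃ i j k l, i+j+k+l = d ∧ c*i+b*j+a*k = p ∧ a*j+b*k+c*l = q := by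
  obtain ⟨i, j, k, l, h1, h2, h3⟩ := h
  by_cases h4 : c*i+b*j+a*k + (a*j+b*k+c*l) < p + q
  · exact Or.inl ⟨i, j, k, l, h1, h2, h3, h4⟩
  · exact Or.inr ⟨i, j, k, l, h1, by omega, by omega⟩

theorem claimA {a b c : ℕ} (hab : a < b) (hbc : b < c) (he : c ≤ a + b) (d p q : ℕ)
    (hO : OrdP a b c d p q) (h1 : DeadP a b c (d+1) (p+c) (q+0))
    (h2 : DeadP a b c (d+1) (p+0) (q+c)) : DeadP a b c d p q := by
  rcases ord_cases hO with h | ⟨i, j, k, l, rfl, rfl, rfl⟩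
  · exact h
  rcases keyA hab hbc he h1 with h | ⟨hk, hc⟩
  · exact h
  have h3 : DeadP a b c (l+k+j+i+1) (c*l+b*k+a*j+c) (a*k+b*j+c*i) := by
    have := dead_symm h2
    convert this using 1 <;> ring
  rcases keyA hab hbc he h3 with h | ⟨hj, -⟩
  · have := dead_symm h
    convert this using 1 <;> ring
  obtain ⟨k, rfl⟩ : ∃ r, k = r+1 := ⟨k-1, by omega⟩
  obtain ⟨j, rfl⟩ : ∃ r, j = r+1 := ⟨j-1, by omega⟩
  refine ⟨i+1, j, k, l+1, by omega, ?_, ?_, ?_⟩ <;> simp only [mul_add] <;> omega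

theorem claimB {a b c : ℕ} (hab : a < b) (he : a + b < c) (d p q : ℕ)
    (hO : OrdP a b c d p q) (h1 : DeadP a b c (d+1) (p+b) (q+a))
    (h2 : DeadP a b c (d+1) (p+a) (q+b)) : DeadP a b c d p q := by
  rcases ord_cases hO with h | ⟨i, j, k, l, rfl, rfl, rfl⟩
  · exact h
  rcases keyB hab he h1 with h | hk
  · exact h
  have h3 : DeadP a b c (l+k+j+i+1) (c*l+b*k+a*j+b) (a*k+b*j+c*i+a) := by
    have := dead_symm h2
    convert this using 1 <;> ring
  rcases keyB hab he h3 with h | hj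
  · have := dead_symm h
    convert this using 1 <;> ring
  obtain ⟨l, rfl⟩ : ∃ r, l = r+1 := ⟨l-1, by omega⟩
  obtain ⟨i, rfl⟩ : ∃ r, i = r+1 := ⟨i-1, by omega⟩
  refine ⟨i, j+1, k+1, l, by omega, ?_, ?_, ?_⟩ <;> simp only [mul_add] <;> omega

noncomputable def ex (p q : ℕ) : Fin 2 →₀ ℕ := Finsupp.single 0 p + Finsupp.single 1 q

theorem ex_zero (p q : ℕ) : ex p q 0 = p := by simp [ex]
theorem ex_one (p q : ℕ) : ex p q 1 = q := by simp [ex]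
theorem ex_eta (m : Fin 2 →₀ ℕ) : ex (m 0) (m 1) = m := by
  ext i; fin_cases i <;> simp [ex]
theorem ex_add (p q r s : ℕ) : ex p q + ex r s = ex (p+r) (q+s) := by
  ext i; fin_cases i <;> simp [ex]
theorem ex_sub (p q r s : ℕ) : ex p q - ex r s = ex (p-r) (q-s) := by
  ext i; fin_cases i <;> simp [ex]
theorem ex_le {p q : ℕ} {m : Fin 2 →₀ ℕ} : ex p q ≤ m ↔ p ≤ m 0 ∧ q ≤ m 1 := by
  rw [Finsupp.le_def]; simp [Fin.forall_fin_two, ex]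

theorem mon_ex {K : Type*} [Field K] (p q : ℕ) :
    (monomial (ex p q) 1 : MvPolynomial (Fin 2) K) = X 0 ^ p * X 1 ^ q := by
  rw [X_pow_eq_monomial, X_pow_eq_monomial, monomial_mul, one_mul, ex]

def ES (a b c d : ℕ) : Set (Fin 2 →₀ ℕ) :=
  {m | ∃ i j k l, i+j+k+l = d ∧ m = ex (c*i+b*j+a*k) (a*j+b*k+c*l)}

open scoped Pointwise in
theorem span_mon_mul {K : Type*} [Field K] (S T : Set (Fin 2 →₀ ℕ)) :
    Ideal.span ((fun s => (monomial s 1 : MvPolynomial (Fin 2) K)) '' S) *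
    Ideal.span ((fun s => (monomial s 1 : MvPolynomial (Fin 2) K)) '' T) =
    Ideal.span ((fun s => (monomial s 1 : MvPolynomial (Fin 2) K)) '' (S + T)) := by
  rw [Ideal.span_mul_span']
  congr 1
  ext x
  simp only [Set.mem_mul, Set.mem_image, Set.mem_add]
  constructor
  · rintro ⟨_, ⟨s, hs, rfl⟩, _, ⟨t, ht, rfl⟩, rfl⟩
    exact ⟨s + t, ⟨s, hs, t, ht, rfl⟩, by simp [monomial_mul]⟩
  · rintro ⟨_, ⟨s, hs, t, ht, rfl⟩, rfl⟩
    exact ⟨_, ⟨s, hs, rfl⟩, _, ⟨t, ht, rfl⟩, by simp [monomial_mul]⟩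

theorem ipow {K : Type*} [Field K] (a b c : ℕ) (u : Fin 4 → MvPolynomial (Fin 2) K)
    (hu0 : u 0 = X 0 ^ c) (hu1 : u 1 = X 0 ^ b * X 1 ^ a)
    (hu2 : u 2 = X 0 ^ a * X 1 ^ b) (hu3 : u 3 = X 1 ^ c) (d : ℕ) :
    (Ideal.span {u 0, u 1, u 2, u 3}) ^ d =
      Ideal.span ((fun s => (monomial s 1 : MvPolynomial (Fin 2) K)) '' (ES a b c d)) := by
  induction d with
  | zero =>
    rw [pow_zero, Ideal.one_eq_top, eq_comm, Ideal.eq_top_iff_one]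
    apply Ideal.subset_span
    exact ⟨0, ⟨0, 0, 0, 0, rfl, by simp [ex]⟩, by simp⟩
  | succ d ih =>
    have h1 : ({u 0, u 1, u 2, u 3} : Set (MvPolynomial (Fin 2) K)) =
        (fun s => (monomial s 1 : MvPolynomial (Fin 2) K)) '' {ex c 0, ex b a, ex a b, ex 0 c} := by
      simp only [Set.image_insert_eq, Set.image_singleton, mon_ex, hu0, hu1, hu2, hu3, pow_zero,
        one_mul, mul_one]
    rw [pow_succ, ih, h1, span_mon_mul]
    congr 2
    ext m
    simp only [Set.mem_add, ES, Set.mem_ofPred_eq, Set.mem_insert_iff, Set.mem_singleton_iff]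
    constructor
    · rintro ⟨_, ⟨i, j, k, l, hs, rfl⟩, _, rfl | rfl | rfl | rfl, rfl⟩
      · exact ⟨i+1, j, k, l, by omega, by rw [ex_add]; congr 1 <;> ring⟩
      · exact ⟨i, j+1, k, l, by omega, by rw [ex_add]; congr 1 <;> ring⟩
      · exact ⟨i, j, k+1, l, by omega, by rw [ex_add]; congr 1 <;> ring⟩
      · exact ⟨i, j, k, l+1, by omega, by rw [ex_add]; congr 1 <;> ring⟩
    · rintro ⟨i, j, k, l, hs, rfl⟩
      rcases i with _ | i
      · rcases j with _ | j
        · rcases k with _ | k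
          · rcases l with _ | l
            · omega
            · exact ⟨_, ⟨0, 0, 0, l, by omega, rfl⟩, ex 0 c, by simp, by rw [ex_add]; congr 1 <;> ring⟩
          · exact ⟨_, ⟨0, 0, k, l, by omega, rfl⟩, ex a b, by simp, by rw [ex_add]; congr 1 <;> ring⟩
        · exact ⟨_, ⟨0, j, k, l, by omega, rfl⟩, ex b a, by simp,
            by rw [ex_add]; congr 1 <;> ring⟩
      · exact ⟨_, ⟨i, j, k, l, by omega, rfl⟩, ex c 0, by simp, by rw [ex_add]; congr 1 <;> ring⟩

theorem mem_pow_iff {K : Type*} [Field K] (a b c d : ℕ) (h : MvPolynomial (Fin 2) K) :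
    h ∈ Ideal.span ((fun s => (monomial s 1 : MvPolynomial (Fin 2) K)) '' (ES a b c d)) ↔
    ∀ p q, coeff (ex p q) h ≠ 0 → OrdP a b c d p q := by
  rw [mem_ideal_span_monomial_image]
  constructor
  · intro H p q hpq
    obtain ⟨_, ⟨i, j, k, l, hs, rfl⟩, hle⟩ := H (ex p q) (mem_support_iff.2 hpq)
    rw [ex_le, ex_zero, ex_one] at hle
    exact ⟨i, j, k, l, hs, hle.1, hle.2⟩
  · intro H m hm
    obtain ⟨i, j, k, l, hs, h1, h2⟩ := H (m 0) (m 1) (by rw [ex_eta]; exact mem_support_iff.1 hm)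
    exact ⟨_, ⟨i, j, k, l, hs, rfl⟩, ex_le.2 ⟨h1, h2⟩⟩

theorem mem_mpow_iff {K : Type*} [Field K] (a b c d : ℕ) (h : MvPolynomial (Fin 2) K) :
    h ∈ Ideal.span {(X 0 : MvPolynomial (Fin 2) K), X 1} *
      Ideal.span ((fun s => (monomial s 1 : MvPolynomial (Fin 2) K)) '' (ES a b c d)) ↔
    ∀ p q, coeff (ex p q) h ≠ 0 → DeadP a b c d p q := by
  have h1 : ({X 0, X 1} : Set (MvPolynomial (Fin 2) K)) =
      (fun s => (monomial s 1 : MvPolynomial (Fin 2) K)) '' {ex 1 0, ex 0 1} := by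
    simp only [Set.image_insert_eq, Set.image_singleton, mon_ex, pow_zero,
      one_mul, mul_one, pow_one]
  rw [h1, span_mon_mul, mem_ideal_span_monomial_image]
  constructor
  · intro H p q hpq
    obtain ⟨_, ⟨_, he, _, ⟨i, j, k, l, hs, rfl⟩, rfl⟩, hle⟩ := H (ex p q) (mem_support_iff.2 hpq)
    rcases he with rfl | rfl <;>
    · dsimp only at hle
      rw [ex_add, ex_le, ex_zero, ex_one] at hle
      exact ⟨i, j, k, l, hs, by omega, by omega, by omega⟩
  · intro H m hm
    obtain ⟨i, j, k, l, hs, h1, h2, h3⟩ :=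
      H (m 0) (m 1) (by rw [ex_eta]; exact mem_support_iff.1 hm)
    by_cases hlt : c*i+b*j+a*k < m 0
    · exact ⟨_, ⟨ex 1 0, by simp, _, ⟨i, j, k, l, hs, rfl⟩, rfl⟩, by
        dsimp only; rw [ex_add, ex_le]; omega⟩
    · exact ⟨_, ⟨ex 0 1, by simp, _, ⟨i, j, k, l, hs, rfl⟩, rfl⟩, by
        dsimp only; rw [ex_add, ex_le]; omega⟩

theorem hc_X_mul {K : Type*} [Field K] (i : Fin 4) (d : ℕ) (f : MvPolynomial (Fin 4) K) :
    homogeneousComponent (d+1) (X i * f) = X i * homogeneousComponent d f := by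
  classical
  ext m
  rw [coeff_homogeneousComponent, coeff_X_mul', coeff_X_mul', coeff_homogeneousComponent]
  by_cases hi : i ∈ m.support
  · rw [if_pos hi, if_pos hi]
    have hle : Finsupp.single i 1 ≤ m := by
      rw [Finsupp.single_le_iff]
      exact Nat.one_le_iff_ne_zero.2 (Finsupp.mem_support_iff.1 hi)
    have : m.degree = (m - Finsupp.single i 1).degree + 1 := by
      conv_lhs => rw [← tsub_add_cancel_of_le hle]
      rw [map_add, Finsupp.degree_single]
    rw [this]
    simp
  · rw [if_neg hi, if_neg hi]; simp

theorem aeval_mem {K : Type*} [Field K] (u : Fin 4 → MvPolynomial (Fin 2) K)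
    (I : Ideal (MvPolynomial (Fin 2) K)) (hu : ∀ i, u i ∈ I) (d : ℕ)
    (f : MvPolynomial (Fin 4) K) (hf : f.IsHomogeneous d) : aeval u f ∈ I ^ d := by
  rw [aeval_def, eval₂_eq]
  refine Ideal.sum_mem _ fun m hm => Ideal.mul_mem_left _ _ ?_
  have hd : ∑ i ∈ m.support, m i = d := by
    have := hf (mem_support_iff.1 hm)
    rw [← this, Finsupp.weight_apply]
    simp [Finsupp.sum]
  rw [← hd, ← Finset.prod_pow_eq_pow_sum]
  exact Ideal.prod_mem_prod fun i _ => Ideal.pow_mem_pow (hu i) _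

theorem final_arg {K : Type*} [Field K] (a b c s t : ℕ) (hst : t < s)
    (h1 : ∀ d p q, DeadP a b c d p q → DeadP a b c (d+1) (p+s) (q+t))
    (hO : ∀ d p q, OrdP a b c d p q → OrdP a b c (d+1) (p+t) (q+s))
    (h2 : ∀ d p q, OrdP a b c d p q → DeadP a b c (d+1) (p+s) (q+t) →
      DeadP a b c (d+1) (p+t) (q+s) → DeadP a b c d p q)
    (u : Fin 4 → MvPolynomial (Fin 2) K) (x y : Fin 4)
    (hx : u x = X 0 ^ s * X 1 ^ t) (hy : u y = X 0 ^ t * X 1 ^ s)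
    (J : Ideal (MvPolynomial (Fin 4) K))
    (hord : ∀ (f : MvPolynomial (Fin 4) K) (d p q : ℕ),
      coeff (ex p q) (aeval u (homogeneousComponent d f)) ≠ 0 → OrdP a b c d p q)
    (hJ : ∀ f : MvPolynomial (Fin 4) K,
      f ∈ J ↔ ∀ d p q : ℕ, coeff (ex p q) (aeval u (homogeneousComponent d f)) ≠ 0 →
        DeadP a b c d p q)
    (g : MvPolynomial (Fin 4) K) (hg : (X x + X y) * g ∈ J) : g ∈ J := by
  classical
  rw [hJ] at hg ⊢
  intro d
  refine core_arg s t hst (OrdP a b c) (DeadP a b c) h1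
    (fun d p q h => dead_symm (h1 _ _ _ (dead_symm h))) hO h2 d
    (fun p q => coeff (ex p q) (aeval u (homogeneousComponent d g)))
    (fun p q => coeff (ex p q) (aeval u (homogeneousComponent (d+1) ((X x + X y) * g))))
    (hord g d) ((aeval u (homogeneousComponent d g)).support.sup fun m => m 0) ?_ ?_ ?_
  · intro p q h
    have := Finset.le_sup (f := fun m : Fin 2 →₀ ℕ => m 0) (mem_support_iff.2 h)
    simpa [ex_zero] using this
  · intro p q h
    by_contra h'
    exact h (hg _ _ _ h')
  · intro P Q
    rw [add_mul, map_add, hc_X_mul, hc_X_mul, map_add, map_mul, map_mul, aeval_X, aeval_X, hx, hy,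
      ← mon_ex, ← mon_ex, coeff_add, coeff_monomial_mul', coeff_monomial_mul']
    simp only [ex_le, ex_zero, ex_one, ex_sub, one_mul]

theorem stmt_15 {K : Type*} [Field K] (a b c : ℕ)
    (ha : 0 < a) (hab : a < b) (hbc : b < c)
    (hgcd : Nat.gcd a (Nat.gcd b c) = 1)
    (u : Fin 4 → MvPolynomial (Fin 2) K)
    (hu0 : u 0 = X 0 ^ c) (hu1 : u 1 = X 0 ^ b * X 1 ^ a)
    (hu2 : u 2 = X 0 ^ a * X 1 ^ b) (hu3 : u 3 = X 1 ^ c)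
    (I mm : Ideal (MvPolynomial (Fin 2) K))
    (hI : I = Ideal.span {u 0, u 1, u 2, u 3})
    (hmm : mm = Ideal.span {(X 0 : MvPolynomial (Fin 2) K), X 1})
    (J : Ideal (MvPolynomial (Fin 4) K))
    (hJ : ∀ f : MvPolynomial (Fin 4) K,
      f ∈ J ↔ ∀ d : ℕ, aeval u (homogeneousComponent d f) ∈ mm * I ^ d)
    :
    ∃ f : MvPolynomial (Fin 4) K,
      f ∈ Ideal.span {(X 0 : MvPolynomial (Fin 4) K), X 1, X 2, X 3} ∧
      ∀ g : MvPolynomial (Fin 4) K ⧸ J,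
        Ideal.Quotient.mk J f * g = 0 → g = 0 := by
  have hu : ∀ i, u i ∈ I := by
    intro i
    rw [hI]
    apply Ideal.subset_span
    fin_cases i <;> simp
  have hIp : ∀ d, I ^ d = Ideal.span ((fun s => (monomial s 1 : MvPolynomial (Fin 2) K)) '' (ES a b c d)) := fun d => by
    rw [hI]; exact ipow a b c u hu0 hu1 hu2 hu3 d
  have hord : ∀ (f : MvPolynomial (Fin 4) K) (d p q : ℕ),
      coeff (ex p q) (aeval u (homogeneousComponent d f)) ≠ 0 → OrdP a b c d p q := by
    intro f d
    rw [← mem_pow_iff, ← hIp]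
    exact aeval_mem u I hu d _ (homogeneousComponent_isHomogeneous d f)
  have hJ' : ∀ f : MvPolynomial (Fin 4) K,
      f ∈ J ↔ ∀ d p q : ℕ, coeff (ex p q) (aeval u (homogeneousComponent d f)) ≠ 0 →
        DeadP a b c d p q := by
    intro f
    rw [hJ]
    refine forall_congr' fun d => ?_
    rw [hIp, hmm, mem_mpow_iff]
  have hX : ∀ i : Fin 4, (X i : MvPolynomial (Fin 4) K) ∈
      Ideal.span {(X 0 : MvPolynomial (Fin 4) K), X 1, X 2, X 3} := by
    intro i
    apply Ideal.subset_span
    fin_cases i <;> simp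
  have key : ∃ x y : Fin 4, ∀ g, (X x + X y) * g ∈ J → g ∈ J := by
    by_cases he : c ≤ a + b
    · refine ⟨0, 3, final_arg a b c c 0 (by omega) (fun d p q => dead_add0) ?_
        (claimA hab hbc he) u 0 3 (by simp [hu0]) (by simp [hu3]) J hord hJ'⟩
      rintro d p q ⟨i, j, k, l, h1, h2, h3⟩
      exact ⟨i, j, k, l+1, by omega, by omega, by rw [mul_add]; omega⟩
    · refine ⟨1, 2, final_arg a b c b a hab (fun d p q => dead_add1) ?_
        (claimB hab (by omega)) u 1 2 hu1 hu2 J hord hJ'⟩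
      rintro d p q ⟨i, j, k, l, h1, h2, h3⟩
      exact ⟨i, j, k+1, l, by omega, by rw [mul_add]; omega, by rw [mul_add]; omega⟩
  obtain ⟨x, y, hxy⟩ := key
  refine ⟨X x + X y, Ideal.add_mem _ (hX x) (hX y), fun g hg => ?_⟩
  obtain ⟨g, rfl⟩ := Ideal.Quotient.mk_surjective g
  rw [← map_mul, Ideal.Quotient.eq_zero_iff_mem] at hg
  exact Ideal.Quotient.eq_zero_iff_mem.2 (hxy g hg)
end

section
/- The following are equivalent: (a) F(I) = T/J is Cohen–Macaulay, in the sense that there exist elements f, g of the ideal (z_1,z_2,z_3,z_4) of T whose images form a regular sequence of length 2 on T/J; (b) J can be generated by at most 3 elements, i.e. there is a finite set G ⊆ T with |G| ≤ 3 and J = (G); (c) J can be generated by exactly 3 elements, i.e. there is a finite set G ⊆ T with |G| = 3 and J = (G). -/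
set_option synthInstance.maxHeartbeats 1000000
set_option maxHeartbeats 1000000
open MvPolynomial


namespace FC

/-! ### Regular sequences of length two in a commutative ring -/

lemma isRegular_pair_iff {R : Type*} [CommRing R] (f g : R) :
    RingTheory.Sequence.IsRegular R [f, g] ↔
      (∀ h, f * h = 0 → h = 0) ∧ (∀ h k, g * h = f * k → ∃ k', h = f * k') ∧
        (1 : R) ∉ Ideal.span {f, g} := by
  constructor
  · intro H
    have h1 := H.top_ne_smul
    have h2 := H.toIsWeaklyRegular
    rw [RingTheory.Sequence.isWeaklyRegular_cons_iff,
      RingTheory.Sequence.isWeaklyRegular_singleton_iff] at h2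
    obtain ⟨h2, h3⟩ := h2
    refine ⟨?_, ?_, ?_⟩
    · intro h hh
      exact (isSMulRegular_iff_right_eq_zero_of_smul.1 h2) h (by simpa using hh)
    · intro h k hk
      have := (isSMulRegular_quotient_iff_mem_of_smul_mem _ g).1 h3 h (by
        rw [smul_eq_mul, hk]
        exact Submodule.smul_mem_pointwise_smul k f ⊤ trivial)
      rw [Submodule.mem_smul_pointwise_iff_exists] at this
      obtain ⟨k', -, hk'⟩ := this
      exact ⟨k', by simpa using hk'.symm⟩
    · intro h
      apply h1
      symm
      rw [Ideal.ofList_cons, Ideal.ofList_singleton, Ideal.smul_eq_mul, Ideal.mul_top,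
        Ideal.eq_top_iff_one]
      rwa [Ideal.span_insert] at h
  · rintro ⟨h1, h2, h3⟩
    refine ⟨?_, ?_⟩
    · rw [RingTheory.Sequence.isWeaklyRegular_cons_iff,
        RingTheory.Sequence.isWeaklyRegular_singleton_iff]
      refine ⟨isSMulRegular_iff_right_eq_zero_of_smul.2 (fun h hh => h1 h (by simpa using hh)), ?_⟩
      refine (isSMulRegular_quotient_iff_mem_of_smul_mem _ g).2 ?_
      intro h hh
      rw [Submodule.mem_smul_pointwise_iff_exists] at hh ⊢
      obtain ⟨k, -, hk⟩ := hh
      obtain ⟨k', hk'⟩ := h2 h k (by simpa using hk.symm)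
      exact ⟨k', trivial, by simpa using hk'.symm⟩
    · intro h
      apply h3
      rw [Ideal.ofList_cons, Ideal.ofList_singleton, Ideal.smul_eq_mul, Ideal.mul_top] at h
      rw [Ideal.span_insert, ← h]
      trivial

/-- Regular on powers. -/
lemma reg_pow {R : Type*} [CommRing R] {f g : R}
    (hf : ∀ h, f * h = 0 → h = 0) (hg : ∀ h k, g * h = f * k → ∃ k', h = f * k')
    (M N : ℕ) : ∀ h k, g ^ N * h = f ^ M * k → ∃ k', h = f ^ M * k' := by
  have h1 : ∀ M h k, g * h = f ^ M * k → ∃ k', h = f ^ M * k' := by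
    intro M
    induction M with
    | zero => intro h k _; exact ⟨h, by simp⟩
    | succ M ih =>
      intro h k hk
      obtain ⟨h', rfl⟩ := hg h (f ^ M * k) (by rw [hk]; ring)
      have : g * h' = f ^ M * k := by
        have := hf (g * h' - f ^ M * k) (by linear_combination hk)
        linear_combination this
      obtain ⟨k', rfl⟩ := ih _ _ this
      exact ⟨k', by ring⟩
  induction N with
  | zero => intro h k hk; exact ⟨k, by simpa using hk⟩
  | succ N ih =>
    intro h k hk
    obtain ⟨k', hk'⟩ := ih (g * h) k (by rw [← hk]; ring)
    exact h1 M h k' hk'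

lemma reg_pow_zero {R : Type*} [CommRing R] {f : R}
    (hf : ∀ h, f * h = 0 → h = 0) (M : ℕ) : ∀ h, f ^ M * h = 0 → h = 0 := by
  induction M with
  | zero => intro h hh; simpa using hh
  | succ M ih =>
    intro h hh
    exact ih h (hf _ (by rw [← hh]; ring))

/-- Vanishing of the zeroth and first local cohomology, in elementary form. -/
lemma section_lift {R : Type*} [CommRing R] {f g : R}
    (hf : ∀ h, f * h = 0 → h = 0) (hg : ∀ h k, g * h = f * k → ∃ k', h = f * k')
    {ι : Type*} [Fintype ι] (q w : ι → R)
    (hfq : f ∈ (Ideal.span (Set.range q)).radical)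
    (hgq : g ∈ (Ideal.span (Set.range q)).radical)
    (hc : ∀ i j, q i * w j = q j * w i) : ∃ v, ∀ i, q i * v = w i := by
  obtain ⟨M, hM⟩ := hfq
  obtain ⟨N, hN⟩ := hgq
  rw [Ideal.mem_span_range_iff_exists_fun] at hM hN
  obtain ⟨A, hA⟩ := hM
  obtain ⟨B, hB⟩ := hN
  have key : ∀ (C : ι → R) (p : R), ∑ i, C i * q i = p → ∀ j,
      q j * (∑ i, C i * w i) = p * w j := by
    intro C p hp j
    rw [← hp, Finset.mul_sum, Finset.sum_mul]
    refine Finset.sum_congr rfl fun i _ => ?_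
    linear_combination C i * hc j i
  have hAB : g ^ N * (∑ i, A i * w i) = f ^ M * (∑ i, B i * w i) := by
    rw [← hB, Finset.sum_mul, Finset.mul_sum]
    refine Finset.sum_congr rfl fun i _ => ?_
    linear_combination B i * key A _ hA i
  obtain ⟨v, hv⟩ := reg_pow hf hg M N _ _ hAB
  refine ⟨v, fun i => ?_⟩
  have := key A _ hA i
  rw [hv] at this
  have := reg_pow_zero hf M (q i * v - w i) (by linear_combination this)
  linear_combination this

end FC

namespace FC

/-! ### Exponent vectors -/

/-- Exponent vectors in four variables. -/
noncomputable def E (i j k l : ℕ) : Fin 4 →₀ ℕ := Finsupp.equivFunOnFinite.symm ![i, j, k, l]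

/-- Exponent vectors in two variables. -/
noncomputable def E2 (p q : ℕ) : Fin 2 →₀ ℕ := Finsupp.equivFunOnFinite.symm ![p, q]

@[simp] lemma E_0 (i j k l : ℕ) : E i j k l 0 = i := rfl
@[simp] lemma E_1 (i j k l : ℕ) : E i j k l 1 = j := rfl
@[simp] lemma E_2 (i j k l : ℕ) : E i j k l 2 = k := rfl
@[simp] lemma E_3 (i j k l : ℕ) : E i j k l 3 = l := rfl
@[simp] lemma E2_0 (p q : ℕ) : E2 p q 0 = p := rfl
@[simp] lemma E2_1 (p q : ℕ) : E2 p q 1 = q := rfl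

lemma E_ext {α β : Fin 4 →₀ ℕ} (h0 : α 0 = β 0) (h1 : α 1 = β 1) (h2 : α 2 = β 2)
    (h3 : α 3 = β 3) : α = β := by
  ext t; fin_cases t <;> assumption

lemma E2_ext {α β : Fin 2 →₀ ℕ} (h0 : α 0 = β 0) (h1 : α 1 = β 1) : α = β := by
  ext t; fin_cases t <;> assumption

lemma E_eta (α : Fin 4 →₀ ℕ) : E (α 0) (α 1) (α 2) (α 3) = α := E_ext rfl rfl rfl rfl

lemma E_inj {i j k l p q r s : ℕ} : E i j k l = E p q r s ↔ i = p ∧ j = q ∧ k = r ∧ l = s := by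
  constructor
  · intro h
    exact ⟨by simpa using DFunLike.congr_fun h 0, by simpa using DFunLike.congr_fun h 1,
      by simpa using DFunLike.congr_fun h 2, by simpa using DFunLike.congr_fun h 3⟩
  · rintro ⟨rfl, rfl, rfl, rfl⟩; rfl

lemma E_le {i j k l p q r s : ℕ} : E i j k l ≤ E p q r s ↔ i ≤ p ∧ j ≤ q ∧ k ≤ r ∧ l ≤ s := by
  constructor
  · intro h
    exact ⟨by simpa using h 0, by simpa using h 1, by simpa using h 2, by simpa using h 3⟩
  · rintro ⟨h0, h1, h2, h3⟩ t
    fin_cases t <;> simpa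

lemma E_add (i j k l p q r s : ℕ) :
    E i j k l + E p q r s = E (i + p) (j + q) (k + r) (l + s) := E_ext rfl rfl rfl rfl

lemma E2_add (i j p q : ℕ) : E2 i j + E2 p q = E2 (i + p) (j + q) := E2_ext rfl rfl

lemma E_degree (i j k l : ℕ) : (E i j k l).degree = i + j + k + l := by
  rw [Finsupp.degree_eq_sum, Fin.sum_univ_four]; rfl

/-- The monomial is in the monomial ideal `m I^d`, `d` its degree. -/
def Bad (a b c i j k l : ℕ) : Prop :=
  ∃ p q r s : ℕ, p + q + r + s = i + j + k + l ∧
    c * p + b * q + a * r ≤ c * i + b * j + a * k ∧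
    a * q + b * r + c * s ≤ a * j + b * k + c * l ∧
    (c * p + b * q + a * r < c * i + b * j + a * k ∨
      a * q + b * r + c * s < a * j + b * k + c * l)

/-- Two monomials of the same degree evaluate to the same monomial. -/
def Eqv (a b c i j k l p q r s : ℕ) : Prop :=
  p + q + r + s = i + j + k + l ∧
    c * p + b * q + a * r = c * i + b * j + a * k ∧
    a * q + b * r + c * s = a * j + b * k + c * l

/-- The monomial `z_1^i z_2^j z_3^k z_4^l`. -/
noncomputable abbrev mon (K : Type*) [Field K] (i j k l : ℕ) : MvPolynomial (Fin 4) K :=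
  monomial (E i j k l) 1

/-- The combinatorial description of the defining ideal of the fiber cone. -/
structure FI {K : Type*} [Field K] (a b c : ℕ) (J : Ideal (MvPolynomial (Fin 4) K)) : Prop where
  bad : ∀ i j k l, Bad a b c i j k l → mon K i j k l ∈ J
  eqv : ∀ i j k l p q r s, Eqv a b c i j k l p q r s → mon K i j k l - mon K p q r s ∈ J
  coef : ∀ f ∈ J, ∀ i j k l, ¬ Bad a b c i j k l → coeff (E i j k l) f ≠ 0 →
    ∃ p q r s, Eqv a b c i j k l p q r s ∧ ¬ (p = i ∧ q = j ∧ r = k ∧ s = l) ∧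
      coeff (E p q r s) f ≠ 0

section
variable {K : Type*} [Field K] {a b c : ℕ} {u : Fin 4 → MvPolynomial (Fin 2) K}

lemma X_pow_mul_E2 (p q : ℕ) :
    (X 0 ^ p * X 1 ^ q : MvPolynomial (Fin 2) K) = monomial (E2 p q) 1 := by
  rw [X_pow_eq_monomial, X_pow_eq_monomial, monomial_mul, one_mul]
  have : (Finsupp.single 0 p + Finsupp.single 1 q : Fin 2 →₀ ℕ) = E2 p q := by
    apply E2_ext <;> simp
  rw [this]

lemma mon_eq (i j k l : ℕ) :
    mon K i j k l = X 0 ^ i * X 1 ^ j * X 2 ^ k * X 3 ^ l := by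
  simp only [X_pow_eq_monomial, monomial_mul, one_mul]
  have : (Finsupp.single 0 i + Finsupp.single 1 j + Finsupp.single 2 k + Finsupp.single 3 l :
      Fin 4 →₀ ℕ) = E i j k l := by
    apply E_ext <;> simp
  rw [this]

lemma eval_mon (hu0 : u 0 = X 0 ^ c) (hu1 : u 1 = X 0 ^ b * X 1 ^ a)
    (hu2 : u 2 = X 0 ^ a * X 1 ^ b) (hu3 : u 3 = X 1 ^ c) (i j k l : ℕ) (r : K) :
    aeval u (monomial (E i j k l) r) =
      monomial (E2 (c * i + b * j + a * k) (a * j + b * k + c * l)) r := by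
  have : (monomial (E i j k l) r : MvPolynomial (Fin 4) K) = C r * mon K i j k l := by
    rw [C_mul_monomial, mul_one]
  rw [this, mon_eq]
  have h2 : (monomial (E2 (c * i + b * j + a * k) (a * j + b * k + c * l)) r :
      MvPolynomial (Fin 2) K) = C r * (X 0 ^ (c * i + b * j + a * k) *
        X 1 ^ (a * j + b * k + c * l)) := by
    rw [X_pow_mul_E2, C_mul_monomial, mul_one]
  rw [h2]
  simp only [map_mul, map_pow, aeval_X, hu0, hu1, hu2, hu3, algHom_C, algebraMap_eq]
  ring

/-- The exponents of `I^d`. -/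
def LS (a b c d : ℕ) : Set (Fin 2 →₀ ℕ) :=
  {γ | ∃ p q r s : ℕ, p + q + r + s = d ∧ c * p + b * q + a * r ≤ γ 0 ∧
    a * q + b * r + c * s ≤ γ 1}

/-- The exponents of `m I^d`. -/
def QS (a b c d : ℕ) : Set (Fin 2 →₀ ℕ) :=
  {γ | ∃ p q r s : ℕ, p + q + r + s = d ∧ c * p + b * q + a * r ≤ γ 0 ∧
    a * q + b * r + c * s ≤ γ 1 ∧ (c * p + b * q + a * r < γ 0 ∨ a * q + b * r + c * s < γ 1)}

lemma pow_le_LS (hu0 : u 0 = X 0 ^ c) (hu1 : u 1 = X 0 ^ b * X 1 ^ a)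
    (hu2 : u 2 = X 0 ^ a * X 1 ^ b) (hu3 : u 3 = X 1 ^ c)
    {I : Ideal (MvPolynomial (Fin 2) K)} (hI : I = Ideal.span {u 0, u 1, u 2, u 3}) (d : ℕ) :
    I ^ d ≤ Ideal.span ((fun s => monomial s (1 : K)) '' LS a b c d) := by
  induction d with
  | zero =>
    intro x _
    rw [mem_ideal_span_monomial_image]
    intro γ _
    exact ⟨γ, ⟨0, 0, 0, 0, by simp⟩, le_rfl⟩
  | succ d ih =>
    rw [pow_succ]
    refine (Ideal.mul_mono_left ih).trans ?_
    have e0 : u 0 = monomial (E2 c 0) 1 := by rw [hu0, ← X_pow_mul_E2]; simp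
    have e1 : u 1 = monomial (E2 b a) 1 := by rw [hu1, ← X_pow_mul_E2]
    have e2 : u 2 = monomial (E2 a b) 1 := by rw [hu2, ← X_pow_mul_E2]
    have e3 : u 3 = monomial (E2 0 c) 1 := by rw [hu3, ← X_pow_mul_E2]; simp
    rw [hI, Ideal.span_mul_span', Ideal.span_le]
    rintro _ ⟨_, ⟨γ, ⟨p, q, r, s, h1, h2, h3⟩, rfl⟩, y, hy, rfl⟩
    simp only [Set.mem_insert_iff, Set.mem_singleton_iff] at hy
    refine Ideal.subset_span ?_
    rcases hy with rfl | rfl | rfl | rfl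
    · refine ⟨γ + E2 c 0, ⟨p + 1, q, r, s, by omega, ?_, ?_⟩, by simp [e0, monomial_mul]⟩ <;>
        simp <;> linarith
    · refine ⟨γ + E2 b a, ⟨p, q + 1, r, s, by omega, ?_, ?_⟩, by simp [e1, monomial_mul]⟩ <;>
        simp <;> linarith
    · refine ⟨γ + E2 a b, ⟨p, q, r + 1, s, by omega, ?_, ?_⟩, by simp [e2, monomial_mul]⟩ <;>
        simp <;> linarith
    · refine ⟨γ + E2 0 c, ⟨p, q, r, s + 1, by omega, ?_, ?_⟩, by simp [e3, monomial_mul]⟩ <;>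
        simp <;> linarith

lemma mul_pow_le_QS (hu0 : u 0 = X 0 ^ c) (hu1 : u 1 = X 0 ^ b * X 1 ^ a)
    (hu2 : u 2 = X 0 ^ a * X 1 ^ b) (hu3 : u 3 = X 1 ^ c)
    {I mm : Ideal (MvPolynomial (Fin 2) K)} (hI : I = Ideal.span {u 0, u 1, u 2, u 3})
    (hmm : mm = Ideal.span {(X 0 : MvPolynomial (Fin 2) K), X 1}) (d : ℕ) :
    mm * I ^ d ≤ Ideal.span ((fun s => monomial s (1 : K)) '' QS a b c d) := by
  refine (Ideal.mul_mono_right (pow_le_LS hu0 hu1 hu2 hu3 hI d)).trans ?_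
  rw [hmm, Ideal.span_mul_span', Ideal.span_le]
  rintro _ ⟨y, hy, _, ⟨γ, ⟨p, q, r, s, h1, h2, h3⟩, rfl⟩, rfl⟩
  simp only [Set.mem_insert_iff, Set.mem_singleton_iff] at hy
  refine Ideal.subset_span ?_
  rcases hy with rfl | rfl
  · refine ⟨E2 1 0 + γ, ⟨p, q, r, s, by omega, ?_, ?_, ?_⟩, ?_⟩
    · simp; omega
    · simp; omega
    · simp; omega
    · have : (X 0 : MvPolynomial (Fin 2) K) = monomial (E2 1 0) 1 := by
        rw [← X_pow_mul_E2]; simp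
      simp [this, monomial_mul]
  · refine ⟨E2 0 1 + γ, ⟨p, q, r, s, by omega, ?_, ?_, ?_⟩, ?_⟩
    · simp; omega
    · simp; omega
    · simp; omega
    · have : (X 1 : MvPolynomial (Fin 2) K) = monomial (E2 0 1) 1 := by
        rw [← X_pow_mul_E2]; simp
      simp [this, monomial_mul]

lemma hc_mon (d i j k l : ℕ) (r : K) :
    homogeneousComponent d (monomial (E i j k l) r) =
      if i + j + k + l = d then monomial (E i j k l) r else 0 := by
  ext γ
  rw [coeff_homogeneousComponent]
  by_cases h : E i j k l = γ
  · subst h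
    rw [E_degree]
    split_ifs <;> simp
  · split_ifs <;> simp [coeff_monomial, h]

lemma mon_mem_pow (hu0 : u 0 = X 0 ^ c) (hu1 : u 1 = X 0 ^ b * X 1 ^ a)
    (hu2 : u 2 = X 0 ^ a * X 1 ^ b) (hu3 : u 3 = X 1 ^ c)
    {I : Ideal (MvPolynomial (Fin 2) K)} (hI : I = Ideal.span {u 0, u 1, u 2, u 3})
    (i j k l : ℕ) :
    monomial (E2 (c * i + b * j + a * k) (a * j + b * k + c * l)) (1 : K) ∈
      I ^ (i + j + k + l) := by
  rw [← eval_mon hu0 hu1 hu2 hu3]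
  change aeval u (mon K i j k l) ∈ _
  rw [mon_eq]
  simp only [map_mul, map_pow, aeval_X, pow_add]
  have h : ∀ t, u t ∈ I := by
    intro t
    rw [hI]
    apply Ideal.subset_span
    fin_cases t <;> simp
  exact Ideal.mul_mem_mul (Ideal.mul_mem_mul (Ideal.mul_mem_mul (Ideal.pow_mem_pow (h _) _)
    (Ideal.pow_mem_pow (h _) _)) (Ideal.pow_mem_pow (h _) _)) (Ideal.pow_mem_pow (h _) _)

theorem FI_of (hu0 : u 0 = X 0 ^ c) (hu1 : u 1 = X 0 ^ b * X 1 ^ a)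
    (hu2 : u 2 = X 0 ^ a * X 1 ^ b) (hu3 : u 3 = X 1 ^ c)
    {I mm : Ideal (MvPolynomial (Fin 2) K)} (hI : I = Ideal.span {u 0, u 1, u 2, u 3})
    (hmm : mm = Ideal.span {(X 0 : MvPolynomial (Fin 2) K), X 1})
    {J : Ideal (MvPolynomial (Fin 4) K)}
    (hJ : ∀ f : MvPolynomial (Fin 4) K,
      f ∈ J ↔ ∀ d : ℕ, aeval u (homogeneousComponent d f) ∈ mm * I ^ d) : FI a b c J := by
  refine ⟨?_, ?_, ?_⟩
  · rintro i j k l ⟨p, q, r, s, h1, h2, h3, h4⟩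
    rw [hJ]
    intro d
    rw [hc_mon]
    split_ifs with hd
    · subst hd
      rw [eval_mon hu0 hu1 hu2 hu3]
      obtain ⟨x, hx⟩ := Nat.exists_eq_add_of_le h2
      obtain ⟨y, hy⟩ := Nat.exists_eq_add_of_le h3
      have hxy : 0 < x ∨ 0 < y := by omega
      rw [hx, hy, ← E2_add, ← one_mul (1 : K), ← monomial_mul,
        mul_comm (monomial _ _), ← h1]
      refine Ideal.mul_mem_mul ?_ (mon_mem_pow hu0 hu1 hu2 hu3 hI p q r s)
      rw [← X_pow_mul_E2, hmm]
      rcases hxy with h | h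
      · exact Ideal.mul_mem_right _ _ (Ideal.pow_mem_of_mem _ (Ideal.subset_span (by simp)) _ h)
      · exact Ideal.mul_mem_left _ _ (Ideal.pow_mem_of_mem _ (Ideal.subset_span (by simp)) _ h)
    · simp
  · rintro i j k l p q r s ⟨h1, h2, h3⟩
    rw [hJ]
    intro d
    rw [map_sub, hc_mon, hc_mon, h1]
    split_ifs with hd
    · rw [map_sub, eval_mon hu0 hu1 hu2 hu3, eval_mon hu0 hu1 hu2 hu3, h2, h3, sub_self]
      exact Ideal.zero_mem _
    · simp
  · intro f hf i j k l hbad hne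
    by_contra hcon
    push Not at hcon
    have h1 := mul_pow_le_QS hu0 hu1 hu2 hu3 hI hmm _ ((hJ f).1 hf (i + j + k + l))
    rw [mem_ideal_span_monomial_image] at h1
    have h2 : coeff (E2 (c * i + b * j + a * k) (a * j + b * k + c * l))
        (aeval u (homogeneousComponent (i + j + k + l) f)) = 0 := by
      by_contra h
      obtain ⟨γ, ⟨p, q, r, s, g1, g2, g3, g4⟩, hγ⟩ := h1 _ (mem_support_iff.2 h)
      have e0 := hγ 0
      have e1 := hγ 1
      simp only [E2_0, E2_1] at e0 e1
      exact hbad ⟨p, q, r, s, g1, by omega, by omega, by omega⟩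
    apply hne
    rw [← h2]
    conv_rhs => rw [f.as_sum]
    rw [map_sum, map_sum, coeff_sum]
    rw [Finset.sum_eq_single (E i j k l)]
    · rw [hc_mon, if_pos rfl, eval_mon hu0 hu1 hu2 hu3, coeff_monomial, if_pos rfl]
    · intro β _ hβ
      rw [← E_eta β, hc_mon]
      split_ifs with hd
      · rw [eval_mon hu0 hu1 hu2 hu3, coeff_monomial]
        split_ifs with he
        · have e0 := DFunLike.congr_fun he 0
          have e1 := DFunLike.congr_fun he 1
          simp only [E2_0, E2_1] at e0 e1
          apply hcon _ _ _ _ ⟨hd, e0, e1⟩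
          intro g0 g1 g2 g3
          exact hβ (E_ext g0 g1 g2 g3)
        · rfl
      · simp
    · intro h
      rw [notMem_support_iff.1 h]
      simp

end
end FC

namespace FC
section
variable {K : Type*} [Field K] {a b c : ℕ} {J : Ideal (MvPolynomial (Fin 4) K)}

/-- Condition (a). -/
def CM (J : Ideal (MvPolynomial (Fin 4) K)) : Prop :=
  ∃ f g : MvPolynomial (Fin 4) K,
    f ∈ Ideal.span {(X 0 : MvPolynomial (Fin 4) K), X 1, X 2, X 3} ∧
    g ∈ Ideal.span {(X 0 : MvPolynomial (Fin 4) K), X 1, X 2, X 3} ∧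
    RingTheory.Sequence.IsRegular (MvPolynomial (Fin 4) K ⧸ J)
      [Ideal.Quotient.mk J f, Ideal.Quotient.mk J g]

lemma CM.lift (h : CM J) (N : Fin 4 → ℕ) (w : Fin 4 → MvPolynomial (Fin 4) K)
    (hc : ∀ i j, X i ^ N i * w j - X j ^ N j * w i ∈ J) :
    ∃ v, ∀ i, X i ^ N i * v - w i ∈ J := by
  obtain ⟨f, g, hf, hg, H⟩ := h
  rw [isRegular_pair_iff] at H
  obtain ⟨h1, h2, -⟩ := H
  set q : Fin 4 → MvPolynomial (Fin 4) K ⧸ J := fun i => Ideal.Quotient.mk J (X i ^ N i) with hq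
  have rad : ∀ p ∈ Ideal.span {(X 0 : MvPolynomial (Fin 4) K), X 1, X 2, X 3},
      Ideal.Quotient.mk J p ∈ (Ideal.span (Set.range q)).radical := by
    intro p hp
    rw [← Ideal.mem_comap]
    revert p
    change Ideal.span _ ≤ _
    rw [Ideal.span_le]
    have hX : ∀ i, (X i : MvPolynomial (Fin 4) K) ∈
        ((Ideal.span (Set.range q)).radical).comap (Ideal.Quotient.mk J) := by
      intro i
      rw [Ideal.mem_comap]
      refine ⟨N i, ?_⟩
      rw [← map_pow]
      exact Ideal.subset_span ⟨i, rfl⟩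
    intro p hp
    simp only [Set.mem_insert_iff, Set.mem_singleton_iff] at hp
    rcases hp with rfl | rfl | rfl | rfl <;> exact hX _
  obtain ⟨v, hv⟩ := section_lift h1 h2 q (fun i => Ideal.Quotient.mk J (w i)) (rad f hf) (rad g hg)
    (by
      intro i j
      simp only [hq]
      rw [← map_mul, ← map_mul, Ideal.Quotient.eq]
      exact hc i j)
  obtain ⟨v, rfl⟩ := Ideal.Quotient.mk_surjective v
  refine ⟨v, fun i => ?_⟩
  have := hv i
  simp only [hq] at this
  rwa [← map_mul, Ideal.Quotient.eq] at this

lemma X_pow_mul_mon_0 (n i j k l : ℕ) : X 0 ^ n * mon K i j k l = mon K (i + n) j k l := by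
  simp only [mon_eq]; ring
lemma X_pow_mul_mon_1 (n i j k l : ℕ) : X 1 ^ n * mon K i j k l = mon K i (j + n) k l := by
  simp only [mon_eq]; ring
lemma X_pow_mul_mon_2 (n i j k l : ℕ) : X 2 ^ n * mon K i j k l = mon K i j (k + n) l := by
  simp only [mon_eq]; ring
lemma X_pow_mul_mon_3 (n i j k l : ℕ) : X 3 ^ n * mon K i j k l = mon K i j k (l + n) := by
  simp only [mon_eq]; ring

lemma coeff_X_pow_mul_zero (t : Fin 4) (n : ℕ) (v : MvPolynomial (Fin 4) K) (α : Fin 4 →₀ ℕ)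
    (h : α t < n) : coeff α (X t ^ n * v) = 0 := by
  rw [X_pow_eq_monomial, coeff_monomial_mul', if_neg]
  intro hle
  have := hle t
  simp at this
  omega

lemma coeff_mon (i j k l p q r s : ℕ) : coeff (E p q r s) (mon K i j k l) =
    if i = p ∧ j = q ∧ k = r ∧ l = s then 1 else 0 := by
  rw [coeff_monomial]
  simp only [E_inj]

lemma FI.h0 (hF : FI a b c J) (h : CM J) (t : Fin 4) (N : Fin 4 → ℕ) (i j k l : ℕ)
    (hk : ∀ s, s ≠ t → X s ^ N s * mon K i j k l ∈ J) : Bad a b c i j k l := by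
  have key : ∀ n : ℕ, ∃ v, X t ^ n * v - mon K i j k l ∈ J ∧ ∀ s, s ≠ t → X s ^ N s * v ∈ J := by
    intro n
    induction n with
    | zero => exact ⟨mon K i j k l, by simp, hk⟩
    | succ n ih =>
      obtain ⟨v, hv1, hv2⟩ := ih
      obtain ⟨v', hv'⟩ := h.lift (Function.update N t 1) (Pi.single t v) (by
        intro x y
        by_cases hx : x = t
        · by_cases hy : y = t
          · subst hx; subst hy; simp
          · subst hx
            simp only [Function.update_self, Pi.single_eq_same, Function.update_of_ne hy,
              Pi.single_eq_of_ne hy]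
            simpa using hv2 y hy
        · by_cases hy : y = t
          · subst hy
            simp only [Function.update_self, Pi.single_eq_same, Function.update_of_ne hx,
              Pi.single_eq_of_ne hx]
            simpa using hv2 x hx
          · simp [Pi.single_eq_of_ne hx, Pi.single_eq_of_ne hy])
      refine ⟨v', ?_, ?_⟩
      · have := hv' t
        simp only [Function.update_self, Pi.single_eq_same, pow_one] at this
        have h2 := J.add_mem (J.mul_mem_left (X t ^ n) this) hv1
        convert h2 using 1
        ring
      · intro s hs
        have := hv' s
        simpa [Function.update_of_ne hs, Pi.single_eq_of_ne hs] using this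
  by_contra hb
  obtain ⟨v, hv, -⟩ := key (i + j + k + l + 1)
  have hlt : ∀ p q r s : ℕ, p + q + r + s = i + j + k + l →
      E p q r s t < i + j + k + l + 1 := by
    intro p q r s hs
    fin_cases t <;> simp <;> omega
  obtain ⟨p, q, r, s, h1, h2, h3⟩ := hF.coef _ hv i j k l hb (by
    rw [coeff_sub, coeff_X_pow_mul_zero _ _ _ _ (hlt i j k l rfl), coeff_mon]
    simp)
  apply h3
  rw [coeff_sub, coeff_X_pow_mul_zero _ _ _ _ (hlt p q r s h1.1), coeff_mon, if_neg]
  · simp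
  · rintro ⟨rfl, rfl, rfl, rfl⟩
    exact h2 ⟨rfl, rfl, rfl, rfl⟩

lemma FI.h00 (hF : FI a b c J) (h : CM J) (i j k l n1 n2 n3 : ℕ)
    (h1 : Bad a b c i (j + n1) k l) (h2 : Bad a b c i j (k + n2) l)
    (h3 : Bad a b c i j k (l + n3)) : Bad a b c i j k l := by
  refine hF.h0 h 0 ![0, n1, n2, n3] i j k l ?_
  intro s hs
  fin_cases s
  · simp at hs
  · exact X_pow_mul_mon_1 (K := K) n1 i j k l ▸ hF.bad _ _ _ _ h1
  · exact X_pow_mul_mon_2 (K := K) n2 i j k l ▸ hF.bad _ _ _ _ h2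
  · exact X_pow_mul_mon_3 (K := K) n3 i j k l ▸ hF.bad _ _ _ _ h3

lemma FI.h01 (hF : FI a b c J) (h : CM J) (i j k l n0 n2 n3 : ℕ)
    (h1 : Bad a b c (i + n0) j k l) (h2 : Bad a b c i j (k + n2) l)
    (h3 : Bad a b c i j k (l + n3)) : Bad a b c i j k l := by
  refine hF.h0 h 1 ![n0, 0, n2, n3] i j k l ?_
  intro s hs
  fin_cases s
  · exact X_pow_mul_mon_0 (K := K) n0 i j k l ▸ hF.bad _ _ _ _ h1
  · simp at hs
  · exact X_pow_mul_mon_2 (K := K) n2 i j k l ▸ hF.bad _ _ _ _ h2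
  · exact X_pow_mul_mon_3 (K := K) n3 i j k l ▸ hF.bad _ _ _ _ h3

lemma FI.h02 (hF : FI a b c J) (h : CM J) (i j k l n0 n1 n3 : ℕ)
    (h1 : Bad a b c (i + n0) j k l) (h2 : Bad a b c i (j + n1) k l)
    (h3 : Bad a b c i j k (l + n3)) : Bad a b c i j k l := by
  refine hF.h0 h 2 ![n0, n1, 0, n3] i j k l ?_
  intro s hs
  fin_cases s
  · exact X_pow_mul_mon_0 (K := K) n0 i j k l ▸ hF.bad _ _ _ _ h1
  · exact X_pow_mul_mon_1 (K := K) n1 i j k l ▸ hF.bad _ _ _ _ h2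
  · simp at hs
  · exact X_pow_mul_mon_3 (K := K) n3 i j k l ▸ hF.bad _ _ _ _ h3

lemma FI.h03 (hF : FI a b c J) (h : CM J) (i j k l n0 n1 n2 : ℕ)
    (h1 : Bad a b c (i + n0) j k l) (h2 : Bad a b c i (j + n1) k l)
    (h3 : Bad a b c i j (k + n2) l) : Bad a b c i j k l := by
  refine hF.h0 h 3 ![n0, n1, n2, 0] i j k l ?_
  intro s hs
  fin_cases s
  · exact X_pow_mul_mon_0 (K := K) n0 i j k l ▸ hF.bad _ _ _ _ h1
  · exact X_pow_mul_mon_1 (K := K) n1 i j k l ▸ hF.bad _ _ _ _ h2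
  · exact X_pow_mul_mon_2 (K := K) n2 i j k l ▸ hF.bad _ _ _ _ h3
  · simp at hs

/-! ### Minimal numbers of generators -/

lemma coeff_mul_min {m : Fin 4 →₀ ℕ} (hm : ∀ f ∈ J, ∀ β ≤ m, β ≠ m → coeff β f = 0)
    (h : MvPolynomial (Fin 4) K) {f : MvPolynomial (Fin 4) K} (hf : f ∈ J) :
    coeff m (h * f) = coeff 0 h * coeff m f := by
  classical
  rw [coeff_mul, Finset.sum_eq_single (0, m)]
  · rintro ⟨p, q⟩ hpq hne
    rw [Finset.HasAntidiagonal.mem_antidiagonal] at hpq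
    simp only at hpq ⊢
    rw [hm f hf q (by rw [← hpq]; exact le_add_self), mul_zero]
    rintro rfl
    apply hne
    simpa using hpq
  · intro h
    simp at h

lemma gens_aux {n : ℕ} (G : Finset (MvPolynomial (Fin 4) K)) (hG : G.card ≤ 3)
    (hJG : J = Ideal.span (G : Set (MvPolynomial (Fin 4) K)))
    (e : Fin n → MvPolynomial (Fin 4) K) (m : Fin n → (Fin 4 →₀ ℕ)) (he : ∀ i, e i ∈ J)
    (hm : ∀ i, ∀ f ∈ J, ∀ β ≤ m i, β ≠ m i → coeff β f = 0)
    (hd : ∀ i j, coeff (m i) (e j) = if i = j then 1 else 0) :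
    n ≤ 3 ∧ (3 ≤ n → ∀ f ∈ J, (∀ i, coeff (m i) f = 0) → f ∈ idealOfVars (Fin 4) K * J) := by
  classical
  have hG' : J = Ideal.span (Set.range (fun g : G => (g : MvPolynomial (Fin 4) K))) := by
    rw [hJG]; congr 1; ext; simp
  have hgJ : ∀ g : G, (g : MvPolynomial (Fin 4) K) ∈ J := by
    intro g; rw [hG']; exact Ideal.subset_span ⟨g, rfl⟩
  set φ : G → (Fin n → K) := fun g i => coeff (m i) (g : MvPolynomial (Fin 4) K) with hφ
  have hrep : ∀ f ∈ J, ∃ h : G → MvPolynomial (Fin 4) K,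
      ∑ g, h g * (g : MvPolynomial (Fin 4) K) = f ∧
      (fun i => coeff (m i) f) = ∑ g, coeff 0 (h g) • φ g := by
    intro f hf
    rw [hG', Ideal.mem_span_range_iff_exists_fun] at hf
    obtain ⟨h, hh⟩ := hf
    refine ⟨h, hh, ?_⟩
    funext i
    rw [← hh, coeff_sum, Finset.sum_apply]
    refine Finset.sum_congr rfl fun g _ => ?_
    rw [coeff_mul_min (hm i) _ (hgJ g)]
    simp [hφ]
  have htop : (⊤ : Submodule K (Fin n → K)) ≤ Submodule.span K (Set.range φ) := by
    rw [← (Pi.basisFun K (Fin n)).span_eq, Submodule.span_le]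
    rintro _ ⟨j, rfl⟩
    obtain ⟨h, -, hh⟩ := hrep (e j) (he j)
    have : (Pi.basisFun K (Fin n)) j = fun i => coeff (m i) (e j) := by
      funext i
      rw [hd]
      simp [Pi.single_apply]
    rw [this, hh]
    exact Submodule.sum_mem _ fun g _ => Submodule.smul_mem _ _ (Submodule.subset_span ⟨g, rfl⟩)
  have hn : n ≤ 3 := by
    have h1 := finrank_range_le_card (R := K) φ
    rw [Set.finrank, top_le_iff.1 htop, finrank_top, Module.finrank_fin_fun, Fintype.card_coe] at h1
    omega
  refine ⟨hn, fun h3 f hf hzero => ?_⟩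
  have hli : LinearIndependent K φ := by
    apply linearIndependent_of_top_le_span_of_card_le_finrank htop
    rw [Module.finrank_fin_fun, Fintype.card_coe]
    omega
  obtain ⟨h, h1, h2⟩ := hrep f hf
  have h4 : ∑ g, coeff 0 (h g) • φ g = 0 := by
    rw [← h2]; funext i; exact hzero i
  have h5 := Fintype.linearIndependent_iff.1 hli _ h4
  rw [← h1]
  refine Ideal.sum_mem _ fun g _ => Ideal.mul_mem_mul ?_ (hgJ g)
  rw [← pow_one (idealOfVars (Fin 4) K), mem_pow_idealOfVars_iff']
  intro x hx
  have : x = 0 := by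
    rw [← Finsupp.degree_eq_zero_iff]; omega
  rw [this, h5]

lemma gens_four (hb : ∃ G : Finset (MvPolynomial (Fin 4) K), G.card ≤ 3 ∧
      J = Ideal.span (G : Set (MvPolynomial (Fin 4) K)))
    (e : Fin 4 → MvPolynomial (Fin 4) K) (m : Fin 4 → (Fin 4 →₀ ℕ)) (he : ∀ i, e i ∈ J)
    (hm : ∀ i, ∀ f ∈ J, ∀ β ≤ m i, β ≠ m i → coeff β f = 0)
    (hd : ∀ i j, coeff (m i) (e j) = if i = j then 1 else 0) : False := by
  obtain ⟨G, hG, hJG⟩ := hb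
  have := (gens_aux G hG hJG e m he hm hd).1
  omega

lemma gens_three (hb : ∃ G : Finset (MvPolynomial (Fin 4) K), G.card ≤ 3 ∧
      J = Ideal.span (G : Set (MvPolynomial (Fin 4) K)))
    (m : Fin 3 → (Fin 4 →₀ ℕ)) (hinj : Function.Injective m)
    (he : ∀ i, monomial (m i) (1 : K) ∈ J)
    (hm : ∀ i, ∀ f ∈ J, ∀ β ≤ m i, β ≠ m i → coeff β f = 0) :
    J = Ideal.span ((fun s => monomial s (1 : K)) '' Set.range m) := by
  classical
  obtain ⟨G, hG, hJG⟩ := hb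
  have hd : ∀ i j, coeff (m i) (monomial (m j) (1 : K)) = if i = j then 1 else 0 := by
    intro i j
    rw [coeff_monomial]
    simp only [hinj.eq_iff, eq_comm]
  have h1 := (gens_aux G hG hJG (fun i => monomial (m i) (1 : K)) m he hm hd).2 le_rfl
  set L := Ideal.span ((fun s => monomial s (1 : K)) '' Set.range m) with hL
  set M := idealOfVars (Fin 4) K
  have hLe : ∀ i, monomial (m i) (1 : K) ∈ L := fun i => Ideal.subset_span ⟨_, ⟨i, rfl⟩, rfl⟩
  have hstep : J ≤ L ⊔ M * J := by
    intro f hf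
    rw [Submodule.mem_sup]
    have hs : ∑ j, C (coeff (m j) f) * monomial (m j) (1 : K) ∈ L :=
      Ideal.sum_mem _ fun j _ => L.mul_mem_left _ (hLe j)
    refine ⟨_, hs, f - ∑ j, C (coeff (m j) f) * monomial (m j) (1 : K), ?_, by ring⟩
    apply h1
    · exact J.sub_mem hf (Ideal.sum_mem _ fun j _ => J.mul_mem_left _ (he j))
    · intro i
      rw [coeff_sub, coeff_sum]
      simp only [coeff_C_mul, hd]
      simp
  have hpow : ∀ n, J ≤ L ⊔ M ^ n * J := by
    intro n
    induction n with
    | zero => simp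
    | succ n ih =>
      refine ih.trans (sup_le le_sup_left ?_)
      refine (Ideal.mul_mono_right hstep).trans ?_
      rw [Ideal.mul_sup, ← mul_assoc, ← pow_succ]
      have hl : M ^ n * L ≤ L := Ideal.mul_le_right
      exact sup_le_sup_right hl _
  apply le_antisymm
  · intro f hf
    rw [hL, mem_ideal_span_monomial_image]
    intro α hα
    have := hpow (α.degree + 1) hf
    rw [Submodule.mem_sup] at this
    obtain ⟨y, hy, z, hz, rfl⟩ := this
    have hz0 : coeff α z = 0 :=
      (mem_pow_idealOfVars_iff' _ _).1 (Ideal.mul_le_left hz) α (by omega)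
    rw [hL, mem_ideal_span_monomial_image] at hy
    apply hy
    rw [mem_support_iff] at hα ⊢
    rwa [coeff_add, hz0, add_zero] at hα
  · rw [hL, Ideal.span_le]
    rintro _ ⟨_, ⟨i, rfl⟩, rfl⟩
    exact he i

lemma pad {p : MvPolynomial (Fin 4) K} (hp : p ∈ J) (hp0 : p ≠ 0) :
    (∃ G : Finset (MvPolynomial (Fin 4) K), G.card ≤ 3 ∧
      J = Ideal.span (G : Set (MvPolynomial (Fin 4) K))) ↔
    (∃ G : Finset (MvPolynomial (Fin 4) K), G.card = 3 ∧
      J = Ideal.span (G : Set (MvPolynomial (Fin 4) K))) := by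
  constructor
  · rintro ⟨G, hG, hJG⟩
    have hinf : (J : Set (MvPolynomial (Fin 4) K)).Infinite := by
      refine Set.infinite_of_injective_forall_mem (f := fun n : ℕ => X 0 ^ n * p) ?_ ?_
      · intro n n' h
        have h2 := mul_right_cancel₀ hp0 h
        have h3 := congrArg MvPolynomial.totalDegree h2
        simpa using h3
      · intro n
        exact J.mul_mem_left _ hp
    obtain ⟨s, h1, h2, h3⟩ := hinf.exists_superset_ncard_eq (s := (G : Set _)) (k := 3)
      (by rw [hJG]; exact Ideal.subset_span) G.finite_toSet (by simpa using hG)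
    have hfin : s.Finite := Set.finite_of_ncard_ne_zero (by omega)
    refine ⟨hfin.toFinset, ?_, ?_⟩
    · rw [← Set.ncard_eq_toFinset_card s hfin, h3]
    · rw [Set.Finite.coe_toFinset]
      apply le_antisymm
      · conv_lhs => rw [hJG]
        exact Ideal.span_mono h1
      · exact Ideal.span_le.2 h2
  · rintro ⟨G, hG, h⟩
    exact ⟨G, hG.le, h⟩

end
end FC

namespace FC
section
variable {K : Type*} [Field K] {a b c : ℕ} {J : Ideal (MvPolynomial (Fin 4) K)}

lemma CM_of {f g : MvPolynomial (Fin 4) K}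
    (hf : f ∈ Ideal.span {(X 0 : MvPolynomial (Fin 4) K), X 1, X 2, X 3})
    (hg : g ∈ Ideal.span {(X 0 : MvPolynomial (Fin 4) K), X 1, X 2, X 3})
    (h1 : ∀ h, f * h ∈ J → h ∈ J)
    (h2 : ∀ h k, g * h - f * k ∈ J → ∃ k', h - f * k' ∈ J)
    (h3 : ∀ p q, p * f + q * g - 1 ∉ J) : CM J := by
  refine ⟨f, g, hf, hg, ?_⟩
  rw [isRegular_pair_iff]
  refine ⟨?_, ?_, ?_⟩
  · intro h hh
    obtain ⟨h, rfl⟩ := Ideal.Quotient.mk_surjective h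
    rw [← map_mul, Ideal.Quotient.eq_zero_iff_mem] at hh
    rw [Ideal.Quotient.eq_zero_iff_mem]
    exact h1 h hh
  · intro h k hh
    obtain ⟨h, rfl⟩ := Ideal.Quotient.mk_surjective h
    obtain ⟨k, rfl⟩ := Ideal.Quotient.mk_surjective k
    rw [← map_mul, ← map_mul, Ideal.Quotient.eq] at hh
    obtain ⟨k', hk'⟩ := h2 h k hh
    refine ⟨Ideal.Quotient.mk J k', ?_⟩
    rwa [← map_mul, Ideal.Quotient.eq]
  · intro h
    rw [Ideal.mem_span_pair] at h
    obtain ⟨p, q, hpq⟩ := h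
    obtain ⟨p, rfl⟩ := Ideal.Quotient.mk_surjective p
    obtain ⟨q, rfl⟩ := Ideal.Quotient.mk_surjective q
    rw [← map_mul, ← map_mul, ← map_add, ← map_one (Ideal.Quotient.mk J), Ideal.Quotient.eq] at hpq
    exact h3 p q hpq

lemma not_X_dvd {q : MvPolynomial (Fin 4) K} (s : Fin 4) (e : Fin 4 → K) (hs : e s = 0)
    (hq : eval e q ≠ 0) : ¬ (X s ∣ q) := by
  rintro ⟨w, rfl⟩
  simp [hs] at hq

lemma dvd_cancel {q w : MvPolynomial (Fin 4) K} {s t : Fin 4} {n m : ℕ}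
    (hs : ¬ (X s ∣ q)) (ht : ¬ (X t ∣ q)) (h : X s ^ n * X t ^ m ∣ q * w) :
    X s ^ n * X t ^ m ∣ w := by
  have hs' : IsRelPrime (X s : MvPolynomial (Fin 4) K) q :=
    (X_prime (i := s)).irreducible.isRelPrime_iff_not_dvd.2 hs
  have ht' : IsRelPrime (X t : MvPolynomial (Fin 4) K) q :=
    (X_prime (i := t)).irreducible.isRelPrime_iff_not_dvd.2 ht
  exact IsRelPrime.dvd_of_dvd_mul_left (hs'.pow_left.mul_left ht'.pow_left) h

lemma sub_aeval_mem {L : Ideal (MvPolynomial (Fin 4) K)} {v : Fin 4 → MvPolynomial (Fin 4) K}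
    (hv : ∀ i, X i - v i ∈ L) (h : MvPolynomial (Fin 4) K) : h - aeval v h ∈ L := by
  have : (Ideal.Quotient.mkₐ K L) = (Ideal.Quotient.mkₐ K L).comp (aeval v) := by
    apply MvPolynomial.algHom_ext
    intro i
    simp only [AlgHom.comp_apply, aeval_X]
    exact Ideal.Quotient.eq.2 (hv i)
  exact Ideal.Quotient.eq.1 (DFunLike.congr_fun this h)

/-! ### Free over `K[z_1, z_4]` -/

/-- Normal polynomials. -/
def Nrm (r : ℕ) (f : MvPolynomial (Fin 4) K) : Prop :=
  ∀ α, coeff α f ≠ 0 → (α 1 = 0 ∨ α 2 = 0) ∧ α 1 < r ∧ α 2 < r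

lemma Nrm.add {r : ℕ} {f g : MvPolynomial (Fin 4) K} (hf : Nrm r f) (hg : Nrm r g) :
    Nrm r (f + g) := by
  intro α hα
  by_cases h : coeff α f = 0
  · exact hg α (by simpa [h] using hα)
  · exact hf α h

lemma Nrm.sub {r : ℕ} {f g : MvPolynomial (Fin 4) K} (hf : Nrm r f) (hg : Nrm r g) :
    Nrm r (f - g) := by
  intro α hα
  by_cases h : coeff α f = 0
  · exact hg α (by simpa [h] using hα)
  · exact hf α h

lemma Nrm.X_mul {r : ℕ} {f : MvPolynomial (Fin 4) K} (hf : Nrm r f) (t : Fin 4) (h1 : t ≠ 1)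
    (h2 : t ≠ 2) : Nrm r (X t * f) := by
  intro α hα
  rw [coeff_X_mul'] at hα
  split_ifs at hα
  · have := hf _ hα
    simpa [Finsupp.single_apply, h1, h2] using this
  · exact absurd rfl hα

lemma CM_of_Nrm {r : ℕ} (hr : 0 < r) (h1 : ∀ h, ∃ h', h - h' ∈ J ∧ Nrm r h')
    (h2 : ∀ f ∈ J, Nrm r f → f = 0) : CM J := by
  refine CM_of (f := X 0) (g := X 3) (Ideal.subset_span (by simp)) (Ideal.subset_span (by simp))
    ?_ ?_ ?_
  · intro h hh
    obtain ⟨h', e1, e2⟩ := h1 h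
    have e3 : X 0 * h' ∈ J := by
      have := J.sub_mem hh (J.mul_mem_left (X 0) e1)
      convert this using 1
      ring
    have e4 := h2 _ e3 (e2.X_mul 0 (by decide) (by decide))
    have e5 : h' = 0 := by
      rcases mul_eq_zero.1 e4 with h | h
      · exact absurd h (X_ne_zero 0)
      · exact h
    simpa [e5] using e1
  · intro h k hh
    obtain ⟨h', e1, e2⟩ := h1 h
    obtain ⟨k', f1, f2⟩ := h1 k
    have e3 : X 3 * h' - X 0 * k' ∈ J := by
      have := J.add_mem (J.sub_mem hh (J.mul_mem_left (X 3) e1)) (J.mul_mem_left (X 0) f1)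
      convert this using 1
      ring
    have e4 := h2 _ e3 ((e2.X_mul 3 (by decide) (by decide)).sub
      (f2.X_mul 0 (by decide) (by decide)))
    have e5 : (X 0 : MvPolynomial (Fin 4) K) ∣ X 3 * h' := ⟨k', by linear_combination e4⟩
    rcases (X_prime (i := (0 : Fin 4)) (R := K)).dvd_or_dvd e5 with h | ⟨w, rfl⟩
    · exact absurd h (not_X_dvd 0 ![0, 0, 0, 1] (by simp) (by simp))
    · exact ⟨w, e1⟩
  · intro p q hh
    obtain ⟨p', e1, e2⟩ := h1 p
    obtain ⟨q', f1, f2⟩ := h1 q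
    have e3 : X 0 * p' + X 3 * q' - 1 ∈ J := by
      have := J.sub_mem hh (J.add_mem (J.mul_mem_left (X 0) e1) (J.mul_mem_left (X 3) f1))
      convert this using 1
      ring
    have one : Nrm r (1 : MvPolynomial (Fin 4) K) := by
      classical
      intro α hα
      rw [coeff_one] at hα
      have : α = 0 := by
        by_contra h
        exact hα (if_neg (Ne.symm h))
      subst this
      simp [hr]
    have e4 := h2 _ e3 (((e2.X_mul 0 (by decide) (by decide)).add
      (f2.X_mul 3 (by decide) (by decide))).sub one)
    have := congrArg (eval (0 : Fin 4 → K)) e4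
    simp at this

/-! ### The case `a + b < c` -/

lemma CM_three {n m : ℕ} (hn : 0 < n) (hm : 0 < m)
    (hJ : J = Ideal.span {X 0 * X 3, X 0 ^ n * X 2 ^ m, X 1 ^ m * X 3 ^ n}) : CM J := by
  have g1 : X 0 * X 3 ∈ J := by rw [hJ]; exact Ideal.subset_span (by simp)
  have g2 : X 0 ^ n * X 2 ^ m ∈ J := by rw [hJ]; exact Ideal.subset_span (by simp)
  have g3 : X 1 ^ m * X 3 ^ n ∈ J := by rw [hJ]; exact Ideal.subset_span (by simp)
  have i0 : (X 0 : MvPolynomial (Fin 4) K) ∈ Ideal.span {(X 0 : MvPolynomial (Fin 4) K), X 1, X 2, X 3} :=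
    Ideal.subset_span (by simp)
  have i1 : (X 1 : MvPolynomial (Fin 4) K) ∈ Ideal.span {(X 0 : MvPolynomial (Fin 4) K), X 1, X 2, X 3} :=
    Ideal.subset_span (by simp)
  have i2 : (X 2 : MvPolynomial (Fin 4) K) ∈ Ideal.span {(X 0 : MvPolynomial (Fin 4) K), X 1, X 2, X 3} :=
    Ideal.subset_span (by simp)
  have i3 : (X 3 : MvPolynomial (Fin 4) K) ∈ Ideal.span {(X 0 : MvPolynomial (Fin 4) K), X 1, X 2, X 3} :=
    Ideal.subset_span (by simp)
  -- substitutions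
  set ψ : MvPolynomial (Fin 4) K →ₐ[K] MvPolynomial (Fin 4) K := aeval ![X 0, X 1, X 2, 0] with hψ
  set χ : MvPolynomial (Fin 4) K →ₐ[K] MvPolynomial (Fin 4) K := aeval ![0, X 1, X 2, X 3] with hχ
  set θ : MvPolynomial (Fin 4) K →ₐ[K] MvPolynomial (Fin 4) K := aeval ![X 0, X 1, -X 0, X 3] with hθ
  have sψ : ∀ h, ∃ w, h = ψ h + X 3 * w := by
    intro h
    have := sub_aeval_mem (L := Ideal.span {(X 3 : MvPolynomial (Fin 4) K)})
      (v := ![X 0, X 1, X 2, 0]) (by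
        intro i; fin_cases i <;> simp [Ideal.mem_span_singleton]) h
    obtain ⟨w, hw⟩ := Ideal.mem_span_singleton.1 this
    exact ⟨w, by rw [← hw]; ring⟩
  have sχ : ∀ h, ∃ w, h = χ h + X 0 * w := by
    intro h
    have := sub_aeval_mem (L := Ideal.span {(X 0 : MvPolynomial (Fin 4) K)})
      (v := ![0, X 1, X 2, X 3]) (by
        intro i; fin_cases i <;> simp [Ideal.mem_span_singleton]) h
    obtain ⟨w, hw⟩ := Ideal.mem_span_singleton.1 this
    exact ⟨w, by rw [← hw]; ring⟩
  have sθ : ∀ h, ∃ w, h = θ h + (X 0 + X 2) * w := by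
    intro h
    have := sub_aeval_mem (L := Ideal.span {(X 0 + X 2 : MvPolynomial (Fin 4) K)})
      (v := ![X 0, X 1, -X 0, X 3]) (by
        intro i; fin_cases i <;> simp [Ideal.mem_span_singleton, add_comm]) h
    obtain ⟨w, hw⟩ := Ideal.mem_span_singleton.1 this
    exact ⟨w, by rw [← hw]; ring⟩
  have ψ0 : ψ (X 0) = X 0 := by simp [hψ]
  have ψ1 : ψ (X 1) = X 1 := by simp [hψ]
  have ψ2 : ψ (X 2) = X 2 := by simp [hψ]
  have ψ3 : ψ (X 3) = 0 := by simp [hψ]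
  have χ0 : χ (X 0) = 0 := by simp [hχ]
  have χ1 : χ (X 1) = X 1 := by simp [hχ]
  have χ2 : χ (X 2) = X 2 := by simp [hχ]
  have χ3 : χ (X 3) = X 3 := by simp [hχ]
  have θ0 : θ (X 0) = X 0 := by simp [hθ]
  have θ1 : θ (X 1) = X 1 := by simp [hθ]
  have θ2 : θ (X 2) = -X 0 := by simp [hθ]
  have θ3 : θ (X 3) = X 3 := by simp [hθ]
  clear_value ψ χ θ
  have repJ : ∀ h ∈ J, ∃ A B C, h = A * (X 0 * X 3) + B * (X 0 ^ n * X 2 ^ m) +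
      C * (X 1 ^ m * X 3 ^ n) := by
    intro h hh
    rw [hJ, Ideal.mem_span_insert'] at hh
    obtain ⟨A, hA⟩ := hh
    rw [Ideal.mem_span_pair] at hA
    obtain ⟨B, C, hBC⟩ := hA
    exact ⟨-A, B, C, by linear_combination -hBC⟩
  refine CM_of (f := X 0 + X 2) (g := X 1 + X 3) (Ideal.add_mem _ i0 i2) (Ideal.add_mem _ i1 i3)
    ?_ ?_ ?_
  · intro h hh
    obtain ⟨A, B, C, e⟩ := repJ _ hh
    have e1 := congrArg ψ e
    simp only [map_mul, map_add, map_pow, ψ0, ψ1, ψ2, ψ3, zero_pow hn.ne', mul_zero, zero_add,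
      add_zero] at e1
    have d1 : X 0 ^ n * X 2 ^ m ∣ ψ h := by
      refine dvd_cancel (q := X 0 + X 2) (not_X_dvd 0 ![0, 0, 1, 0] (by simp) (by simp))
        (not_X_dvd 2 ![1, 0, 0, 0] (by simp) (by simp)) ⟨ψ B, ?_⟩
      rw [e1]; ring
    obtain ⟨k, hk⟩ := d1
    obtain ⟨w, hw⟩ := sψ h
    have h2 : (X 0 + X 2) * (X 3 * w) ∈ J := by
      have := J.sub_mem hh (J.mul_mem_left ((X 0 + X 2) * k) g2)
      convert this using 1
      rw [hw, hk]; ring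
    have h3 : X 3 * w ∈ J := by
      obtain ⟨A, B, C, e⟩ := repJ _ h2
      have e1 := congrArg χ e
      simp only [map_mul, map_add, map_pow, χ0, χ1, χ2, χ3, zero_pow hn.ne', mul_zero, zero_mul,
        zero_add] at e1
      have d1 : X 1 ^ m * X 3 ^ n ∣ X 3 * χ w := by
        refine dvd_cancel (q := X 2) (not_X_dvd 1 ![0, 0, 1, 0] (by simp) (by simp))
          (not_X_dvd 3 ![0, 0, 1, 0] (by simp) (by simp)) ⟨χ C, ?_⟩
        rw [e1]; ring
      obtain ⟨k', hk'⟩ := d1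
      obtain ⟨w', hw'⟩ := sχ w
      have := J.add_mem (J.mul_mem_left k' g3) (J.mul_mem_left w' g1)
      convert this using 1
      rw [hw', mul_add, hk']; ring
    rw [hw, hk]
    exact J.add_mem (by rw [mul_comm]; exact J.mul_mem_left _ g2) h3
  · intro h k hh
    obtain ⟨A, B, C, e⟩ := repJ _ hh
    have e1 := congrArg θ e
    simp only [map_mul, map_sub, map_add, map_pow, θ0, θ1, θ2, θ3, add_neg_cancel, zero_mul,
      sub_zero] at e1
    -- the ideal after substitution
    have g4 : ∃ z, X 0 ^ (n + m) - (X 0 + X 2) * z ∈ J := by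
      obtain ⟨z, hz⟩ := sub_dvd_pow_sub_pow (X 0 : MvPolynomial (Fin 4) K) (-X 2) m
      refine ⟨X 0 ^ n * z, ?_⟩
      have := J.mul_mem_left ((-1) ^ m) g2
      convert this using 1
      have h1 : (-X 2 : MvPolynomial (Fin 4) K) ^ m = (-1) ^ m * X 2 ^ m := by
        rw [neg_pow]
      rw [h1] at hz
      rw [pow_add]
      linear_combination X 0 ^ n * hz
    obtain ⟨z, g4⟩ := g4
    obtain ⟨y, hy⟩ := sθ h
    have neg : (-X 0 : MvPolynomial (Fin 4) K) ^ m = (-1) ^ m * X 0 ^ m := by rw [neg_pow]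
    rw [neg] at e1
    have e2 := congrArg χ e1
    simp only [map_mul, map_add, map_pow, χ0, χ1, χ2, χ3, zero_pow hn.ne', mul_zero, zero_mul,
      zero_add] at e2
    have d1 : X 1 ^ m * X 3 ^ n ∣ χ (θ h) := by
      refine dvd_cancel (q := X 1 + X 3) (not_X_dvd 1 ![0, 0, 0, 1] (by simp) (by simp))
        (not_X_dvd 3 ![0, 1, 0, 0] (by simp) (by simp)) ⟨χ (θ C), ?_⟩
      rw [e2]; ring
    obtain ⟨k1, hk1⟩ := d1
    obtain ⟨w, hw⟩ := sχ (θ h)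
    have e3 : (X 1 + X 3) * (X 0 * w) = θ A * (X 0 * X 3) + θ B * (X 0 ^ n * ((-1) ^ m * X 0 ^ m)) +
        (θ C - (X 1 + X 3) * k1) * (X 1 ^ m * X 3 ^ n) := by
      have : (X 1 + X 3) * (θ h) = (X 1 + X 3) * (X 1 ^ m * X 3 ^ n * k1 + X 0 * w) := by
        rw [← hk1, ← hw]
      linear_combination e1 - this
    have e4 := congrArg ψ e3
    simp only [map_mul, map_add, map_pow, ψ0, ψ1, ψ2, ψ3, zero_pow hn.ne', mul_zero, zero_add,
      add_zero, map_neg, map_one] at e4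
    have d2 : X 0 ^ (n + m) * X 0 ^ 0 ∣ X 0 * ψ w := by
      refine dvd_cancel (q := X 1) (not_X_dvd 0 ![0, 1, 0, 0] (by simp) (by simp))
        (not_X_dvd 0 ![0, 1, 0, 0] (by simp) (by simp)) ⟨ψ (θ B) * (-1) ^ m, ?_⟩
      rw [e4, pow_add]; ring
    obtain ⟨k2, hk2⟩ := d2
    obtain ⟨w2, hw2⟩ := sψ w
    -- assemble
    refine ⟨y + z * k2, ?_⟩
    have := J.add_mem (J.add_mem (J.mul_mem_left k1 g3) (J.mul_mem_left k2 g4))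
      (J.mul_mem_left w2 g1)
    convert this using 1
    have e5 : X 0 * w = X 0 ^ (n + m) * k2 + X 0 * X 3 * w2 := by
      rw [hw2, mul_add, hk2]; ring
    rw [hy, hw, hk1]
    linear_combination e5
  · intro p q hh
    obtain ⟨A, B, C, e⟩ := repJ _ hh
    have := congrArg (eval (0 : Fin 4 → K)) e
    simp [hn.ne', hm.ne'] at this

end
end FC

namespace FC

/-! ### Elementary facts on `Bad` and `Eqv` -/

lemma Bad.mono {a b c i j k l i' j' k' l' : ℕ} (h : Bad a b c i j k l) (hi : i ≤ i') (hj : j ≤ j')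
    (hk : k ≤ k') (hl : l ≤ l') : Bad a b c i' j' k' l' := by
  obtain ⟨p, q, r, s, h1, h2, h3, h4⟩ := h
  obtain ⟨i', rfl⟩ := Nat.exists_eq_add_of_le hi
  obtain ⟨j', rfl⟩ := Nat.exists_eq_add_of_le hj
  obtain ⟨k', rfl⟩ := Nat.exists_eq_add_of_le hk
  obtain ⟨l', rfl⟩ := Nat.exists_eq_add_of_le hl
  refine ⟨p + i', q + j', r + k', s + l', by omega, by linarith, by linarith, ?_⟩
  rcases h4 with h4 | h4
  · left; linarith
  · right; linarith

lemma Bad.mirror {a b c i j k l : ℕ} (h : Bad a b c i j k l) : Bad a b c l k j i := by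
  obtain ⟨p, q, r, s, h1, h2, h3, h4⟩ := h
  refine ⟨s, r, q, p, by omega, by linarith, by linarith, ?_⟩
  rcases h4 with h4 | h4
  · right; linarith
  · left; linarith

lemma Eqv.bad {a b c i j k l p q r s : ℕ} (h : Eqv a b c i j k l p q r s)
    (hb : Bad a b c p q r s) : Bad a b c i j k l := by
  obtain ⟨e1, e2, e3⟩ := h
  obtain ⟨p', q', r', s', h1, h2, h3, h4⟩ := hb
  refine ⟨p', q', r', s', by omega, by omega, by omega, by omega⟩

lemma not_bad_zero (a b c : ℕ) : ¬ Bad a b c 0 0 0 0 := by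
  rintro ⟨p, q, r, s, h1, h2, h3, h4⟩
  simp at h4

lemma Eqv.main {a b c i j k l p q r s : ℕ} (hc : c ≠ a + b) (h : Eqv a b c i j k l p q r s) :
    p + s = i + l ∧ q + r = j + k ∧ (c : ℤ) * (p - i) = (b - a) * (j - q) := by
  obtain ⟨e1, e2, e3⟩ := h
  zify at e1 e2 e3 hc ⊢
  have h1 : ((c : ℤ) - (a + b)) * ((p + s) - (i + l)) = 0 := by
    linear_combination e2 + e3 - (a + b) * e1
  have h2 : (p + s : ℤ) = i + l := by
    rcases mul_eq_zero.1 h1 with h | h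
    · exact absurd (sub_eq_zero.1 h) hc
    · linarith
  have h3 : (q + r : ℤ) = j + k := by linarith
  refine ⟨h2, h3, ?_⟩
  linear_combination e2 - a * h3

lemma Eqv.of {a b c i j k l p q r s : ℕ} (h1 : p + s = i + l) (h2 : q + r = j + k)
    (h3 : (c : ℤ) * (p - i) = (b - a) * (j - q)) : Eqv a b c i j k l p q r s := by
  refine ⟨by omega, ?_, ?_⟩
  · zify at h1 h2 ⊢
    linear_combination h3 + a * h2
  · zify at h1 h2 ⊢
    linear_combination c * h1 - h3 + b * h2

section
variable {K : Type*} [Field K] {a b c : ℕ} {J : Ideal (MvPolynomial (Fin 4) K)}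

lemma FI.coef_zero (hF : FI a b c J) {f : MvPolynomial (Fin 4) K} (hf : f ∈ J) {i j k l : ℕ}
    (hb : ¬ Bad a b c i j k l)
    (hu : ∀ p q r s, Eqv a b c i j k l p q r s → p = i ∧ q = j ∧ r = k ∧ s = l) :
    coeff (E i j k l) f = 0 := by
  by_contra h
  obtain ⟨p, q, r, s, h1, h2, -⟩ := hF.coef f hf i j k l hb h
  exact h2 (hu p q r s h1)

lemma eq_span_monomial {n : ℕ} (m : Fin n → (Fin 4 →₀ ℕ)) (h1 : ∀ t, monomial (m t) (1 : K) ∈ J)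
    (h2 : ∀ f ∈ J, ∀ α, coeff α f ≠ 0 → ∃ t, m t ≤ α) :
    J = Ideal.span ((fun s => monomial s (1 : K)) '' Set.range m) := by
  apply le_antisymm
  · intro f hf
    rw [mem_ideal_span_monomial_image]
    intro α hα
    obtain ⟨t, ht⟩ := h2 f hf α (mem_support_iff.1 hα)
    exact ⟨m t, ⟨t, rfl⟩, ht⟩
  · rw [Ideal.span_le]
    rintro _ ⟨_, ⟨i, rfl⟩, rfl⟩
    exact h1 i

lemma gens_of_span {m : Fin 3 → (Fin 4 →₀ ℕ)}
    (h : J = Ideal.span ((fun s => monomial s (1 : K)) '' Set.range m)) :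
    ∃ G : Finset (MvPolynomial (Fin 4) K), G.card ≤ 3 ∧
      J = Ideal.span (G : Set (MvPolynomial (Fin 4) K)) := by
  classical
  refine ⟨Finset.univ.image (fun t => monomial (m t) (1 : K)), ?_, ?_⟩
  · exact Finset.card_image_le.trans (by simp)
  · rw [h, ← Set.range_comp]
    congr 1
    simp [Function.comp_def]

lemma Nrm.C_mul {r : ℕ} {f : MvPolynomial (Fin 4) K} (hf : Nrm r f) (x : K) : Nrm r (C x * f) := by
  intro α hα
  rw [coeff_C_mul] at hα
  exact hf α (right_ne_zero_of_mul hα)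

lemma Nrm.zero (r : ℕ) : Nrm r (0 : MvPolynomial (Fin 4) K) := by
  intro α hα
  simp at hα

lemma Nrm.mon {r i j k l : ℕ} (h0 : j = 0 ∨ k = 0) (h1 : j < r) (h2 : k < r) :
    Nrm r (mon K i j k l) := by
  classical
  intro α hα
  rw [coeff_monomial] at hα
  have : E i j k l = α := by
    by_contra h
    exact hα (if_neg h)
  subst this
  simp [h0, h1, h2]

lemma exists_Nrm {r : ℕ} (h : ∀ i j k l, ∃ h', mon K i j k l - h' ∈ J ∧ Nrm r h') (f) :
    ∃ h', f - h' ∈ J ∧ Nrm r h' := by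
  induction f using MvPolynomial.induction_on' with
  | monomial α x =>
    obtain ⟨h', e1, e2⟩ := h (α 0) (α 1) (α 2) (α 3)
    rw [mon, E_eta] at e1
    refine ⟨C x * h', ?_, e2.C_mul x⟩
    have := J.mul_mem_left (C x) e1
    rwa [mul_sub, C_mul_monomial, mul_one] at this
  | add p q hp hq =>
    obtain ⟨p', e1, e2⟩ := hp
    obtain ⟨q', f1, f2⟩ := hq
    refine ⟨p' + q', ?_, e2.add f2⟩
    have := J.add_mem e1 f1
    convert this using 1
    ring

/-! ### The case `c < a + b` -/

lemma caseA (ha : 0 < a) (hab : a < b) (hbc : b < c) (h : c < a + b) (hF : FI a b c J) :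
    (CM J ↔ ∃ G : Finset (MvPolynomial (Fin 4) K), G.card ≤ 3 ∧
      J = Ideal.span (G : Set (MvPolynomial (Fin 4) K))) ∧ ∃ p ∈ J, p ≠ 0 := by
  classical
  have hne : c ≠ a + b := by omega
  have b11 : Bad a b c 0 1 1 0 := ⟨1, 0, 0, 1, by omega, by omega, by omega, by omega⟩
  have hex : ∃ r, Bad a b c 0 r 0 0 := by
    refine ⟨c, b, 0, 0, c - b, by omega, ?_, ?_, ?_⟩
    · simp [mul_comm]
    · obtain ⟨d, rfl⟩ := Nat.exists_eq_add_of_lt hbc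
      simp only [show b + d + 1 - b = d + 1 by omega]
      nlinarith
    · right
      obtain ⟨d, rfl⟩ := Nat.exists_eq_add_of_lt hbc
      simp only [show b + d + 1 - b = d + 1 by omega]
      nlinarith
  set r := Nat.find hex with hr
  have br : Bad a b c 0 r 0 0 := Nat.find_spec hex
  have br' : Bad a b c 0 0 r 0 := br.mirror
  have nb : ∀ j < r, ¬ Bad a b c 0 j 0 0 := fun j hj => Nat.find_min hex hj
  have nb' : ∀ j < r, ¬ Bad a b c 0 0 j 0 := fun j hj hb => nb j hj hb.mirror
  clear_value r
  have r2 : 2 ≤ r := by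
    by_contra hlt
    have : r = 0 ∨ r = 1 := by omega
    rcases this with rfl | rfl
    · exact not_bad_zero _ _ _ br
    · obtain ⟨p, q, r, s, h1, h2, h3, h4⟩ := br
      have : (p = 1 ∧ q = 0 ∧ r = 0 ∧ s = 0) ∨ (p = 0 ∧ q = 1 ∧ r = 0 ∧ s = 0) ∨
        (p = 0 ∧ q = 0 ∧ r = 1 ∧ s = 0) ∨ (p = 0 ∧ q = 0 ∧ r = 0 ∧ s = 1) := by omega
      rcases this with ⟨rfl, rfl, rfl, rfl⟩ | ⟨rfl, rfl, rfl, rfl⟩ | ⟨rfl, rfl, rfl, rfl⟩ |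
        ⟨rfl, rfl, rfl, rfl⟩ <;> omega
  have u1 : ∀ j p q r s, Eqv a b c 0 j 0 0 p q r s → p = 0 ∧ q = j ∧ r = 0 ∧ s = 0 := by
    intro j p q r s he
    obtain ⟨e1, e2, e3⟩ := he.main hne
    have : p = 0 := by omega
    subst this
    have : ((b : ℤ) - a) * (j - q) = 0 := by rw [← e3]; simp
    rcases mul_eq_zero.1 this with h | h <;> omega
  have u2 : ∀ j p q r s, Eqv a b c 0 0 j 0 p q r s → p = 0 ∧ q = 0 ∧ r = j ∧ s = 0 := by
    intro j p q r s he
    obtain ⟨e1, e2, e3⟩ := he.main hne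
    have : p = 0 := by omega
    subst this
    have : ((b : ℤ) - a) * ((0 : ℕ) - q) = 0 := by rw [← e3]; simp
    rcases mul_eq_zero.1 this with h | h <;> omega
  have z1 : ∀ f ∈ J, ∀ j < r, coeff (E 0 j 0 0) f = 0 := fun f hf j hj =>
    hF.coef_zero hf (nb j hj) (u1 j)
  have z2 : ∀ f ∈ J, ∀ j < r, coeff (E 0 0 j 0) f = 0 := fun f hf j hj =>
    hF.coef_zero hf (nb' j hj) (u2 j)
  set m : Fin 3 → (Fin 4 →₀ ℕ) := ![E 0 1 1 0, E 0 r 0 0, E 0 0 r 0] with hm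
  have hmJ : ∀ t, monomial (m t) (1 : K) ∈ J := by
    intro t
    fin_cases t
    · exact hF.bad _ _ _ _ b11
    · exact hF.bad _ _ _ _ br
    · exact hF.bad _ _ _ _ br'
  have key1 : CM J → J = Ideal.span ((fun s => monomial s (1 : K)) '' Set.range m) := by
    intro hCM
    have norm_nb : ∀ i j k l, (j = 0 ∨ k = 0) → j < r → k < r → ¬ Bad a b c i j k l := by
      intro i j k l h0 h1 h2 hb
      have b1 : Bad a b c 0 j k l := hF.h03 hCM 0 j k l i r r (by simpa using hb)
        (br.mono (by omega) (by omega) (by omega) (by omega))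
        (br'.mono (by omega) (by omega) (by omega) (by omega))
      have b2 : Bad a b c 0 j k 0 := hF.h00 hCM 0 j k 0 r r l
        (br.mono (by omega) (by omega) (by omega) (by omega))
        (br'.mono (by omega) (by omega) (by omega) (by omega)) (by simpa using b1)
      rcases h0 with rfl | rfl
      · exact nb' k h2 b2
      · exact nb j h1 b2
    have nobin : ∀ σ t : ℕ, 0 < σ → t < r → (c : ℤ) * σ = (b - a) * t → False := by
      intro σ t hσ ht he
      have h03 : mon K σ 0 t 0 - mon K 0 t 0 σ ∈ J := by
        refine hF.eqv _ _ _ _ _ _ _ _ (Eqv.of (by omega) (by omega) ?_)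
        push_cast
        linear_combination -he
      have bb : ∀ i j k l, Bad a b c i j k l → -mon K i j k l ∈ J := fun i j k l hb =>
        J.neg_mem (hF.bad i j k l hb)
      have w1 : Bad a b c 0 (t + r) 0 0 := br.mono (by omega) (by omega) (by omega) (by omega)
      have w2 : Bad a b c 0 t (0 + r) 0 := br'.mono (by omega) (by omega) (by omega) (by omega)
      have w3 : Bad a b c 0 (0 + r) t 0 := br.mono (by omega) (by omega) (by omega) (by omega)
      have w4 : Bad a b c 0 0 (t + r) 0 := br'.mono (by omega) (by omega) (by omega) (by omega)
      obtain ⟨v, hv⟩ := hCM.lift ![σ, r, r, σ] ![mon K 0 t 0 0, 0, 0, mon K 0 0 t 0] (by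
        intro i j
        fin_cases i <;> fin_cases j <;>
          simp only [Fin.zero_eta, Fin.mk_one, Fin.reduceFinMk, Matrix.cons_val, mul_zero,
            sub_self, zero_sub, sub_zero, J.zero_mem, X_pow_mul_mon_0, X_pow_mul_mon_1,
            X_pow_mul_mon_2, X_pow_mul_mon_3]
        · exact bb _ _ _ _ w1
        · exact bb _ _ _ _ w2
        · simpa using h03
        · exact hF.bad _ _ _ _ w1
        · exact hF.bad _ _ _ _ w3
        · exact hF.bad _ _ _ _ w2
        · exact hF.bad _ _ _ _ w4
        · simpa using J.neg_mem h03
        · exact bb _ _ _ _ w3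
        · exact bb _ _ _ _ w4)
      have h0 := z1 _ (hv 0) t ht
      rw [coeff_sub, coeff_X_pow_mul_zero] at h0
      · simp at h0
      · simpa using hσ
    refine eq_span_monomial m hmJ ?_
    intro f hf α hα
    by_contra hno
    push Not at hno
    rw [← E_eta α] at hno hα
    generalize α 0 = i at *
    generalize α 1 = j at *
    generalize α 2 = k at *
    generalize α 3 = l at *
    have n0 := hno 0
    have n1 := hno 1
    have n2 := hno 2
    simp [hm, E_le] at n0 n1 n2
    have j0 : j = 0 ∨ k = 0 := by omega
    obtain ⟨p, q, r', s, h1, h2, h3⟩ := hF.coef f hf i j k l (norm_nb i j k l j0 n1 n2) hα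
    have nbβ : ¬ Bad a b c p q r' s := fun hb => norm_nb i j k l j0 n1 n2 (h1.bad hb)
    have m0 : ¬ (1 ≤ q ∧ 1 ≤ r') := fun hh =>
      nbβ (b11.mono (by omega) (by omega) (by omega) (by omega))
    have m1 : q < r := by
      by_contra hh
      exact nbβ (br.mono (by omega) (by omega) (by omega) (by omega))
    have m2 : r' < r := by
      by_contra hh
      exact nbβ (br'.mono (by omega) (by omega) (by omega) (by omega))
    obtain ⟨e1, e2, e3⟩ := h1.main hne
    have hc0 : (0 : ℤ) < c := by omega
    have hba : (0 : ℤ) < b - a := by omega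
    rcases lt_trichotomy j q with hlt | heq | hlt
    · -- j = 0, q = k
      have : j = 0 := by omega
      subst this
      have : q = k := by omega
      subst this
      have hpi : p < i := by
        by_contra hh
        have h1 : (0 : ℤ) ≤ c * (p - i) := mul_nonneg hc0.le (by omega)
        have h2 : (0 : ℤ) < (b - a) * q := mul_pos hba (by omega)
        push_cast at e3
        linarith
      refine nobin (i - p) q (by omega) m1 ?_
      push_cast [hpi.le] at e3 ⊢
      linear_combination -e3
    · subst heq
      have : (c : ℤ) * (p - i) = 0 := by rw [e3]; simp
      rcases mul_eq_zero.1 this with hh | hh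
      · omega
      · exact h2 ⟨by omega, rfl, by omega, by omega⟩
    · have : q = 0 := by omega
      subst this
      have hpi : i < p := by
        by_contra hh
        have h1 : (c : ℤ) * (p - i) ≤ 0 := mul_nonpos_of_nonneg_of_nonpos hc0.le (by omega)
        have h2 : (0 : ℤ) < (b - a) * j := mul_pos hba (by omega)
        push_cast at e3
        linarith
      refine nobin (p - i) j (by omega) n1 ?_
      push_cast [hpi.le] at e3 ⊢
      linear_combination e3
  have key2 : (∃ G : Finset (MvPolynomial (Fin 4) K), G.card ≤ 3 ∧
      J = Ideal.span (G : Set (MvPolynomial (Fin 4) K))) →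
      J = Ideal.span ((fun s => monomial s (1 : K)) '' Set.range m) := by
    intro hb
    refine gens_three hb m ?_ hmJ ?_
    · intro x y
      fin_cases x <;> fin_cases y <;> simp [hm, E_inj] <;> omega
    · intro t f hf β hle hneq
      rw [← E_eta β] at hle hneq ⊢
      generalize β 0 = i at *
      generalize β 1 = j at *
      generalize β 2 = k at *
      generalize β 3 = l at *
      fin_cases t
      all_goals
        simp [hm, E_le, E_inj] at hle hneq
        obtain ⟨rfl, hj, hk, rfl⟩ := hle
      · by_cases hk0 : k = 0
        · subst hk0
          exact z1 f hf j (by omega)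
        · have : j = 0 := by omega
          subst this
          exact z2 f hf k (by omega)
      · subst hk
        exact z1 f hf j (by omega)
      · subst hj
        exact z2 f hf k (by omega)
  have key3 : J = Ideal.span ((fun s => monomial s (1 : K)) '' Set.range m) → CM J := by
    intro hJ
    refine CM_of_Nrm (r := r) (by omega) (exists_Nrm ?_) ?_
    · intro i j k l
      by_cases hn : (j = 0 ∨ k = 0) ∧ j < r ∧ k < r
      · exact ⟨mon K i j k l, by simp, Nrm.mon hn.1 hn.2.1 hn.2.2⟩
      · refine ⟨0, ?_, Nrm.zero r⟩
        rw [sub_zero]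
        apply hF.bad
        by_cases h1 : j < r
        · by_cases h2 : k < r
          · exact b11.mono (by omega) (by omega) (by omega) (by omega)
          · exact br'.mono (by omega) (by omega) (by omega) (by omega)
        · exact br.mono (by omega) (by omega) (by omega) (by omega)
    · intro f hf hN
      ext α
      rw [coeff_zero]
      by_contra hα
      rw [hJ, mem_ideal_span_monomial_image] at hf
      obtain ⟨_, ⟨t, rfl⟩, ht⟩ := hf α (mem_support_iff.2 hα)
      obtain ⟨h0, h1, h2⟩ := hN α hα
      rw [← E_eta α] at ht
      fin_cases t <;> simp [hm, E_le] at ht <;> omega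
  refine ⟨⟨fun hh => gens_of_span (key1 hh), fun hh => key3 (key2 hh)⟩,
    mon K 0 1 1 0, hF.bad _ _ _ _ b11, by simp [mon]⟩

end
end FC

namespace FC
section
variable {K : Type*} [Field K] {a b c : ℕ} {J : Ideal (MvPolynomial (Fin 4) K)}

/-! ### The case `a + b < c` -/

lemma not_bad_mid (h : a + b < c) (j k : ℕ) : ¬ Bad a b c 0 j k 0 := by
  rintro ⟨p, q, r, s, h1, h2, h3, h4⟩
  have e : (a + b) * (p + q + r + s) = (a + b) * (0 + j + k + 0) := by rw [h1]
  have : p + s = 0 := by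
    by_contra hne
    have h5 : (a + b) * (p + s) < c * (p + s) := Nat.mul_lt_mul_of_pos_right h (by omega)
    nlinarith
  have hp : p = 0 := by omega
  have hs : s = 0 := by omega
  subst hp hs
  rcases h4 with h4 | h4 <;> nlinarith

lemma caseC (ha : 0 < a) (hab : a < b) (h : a + b < c) (hF : FI a b c J) :
    (CM J ↔ ∃ G : Finset (MvPolynomial (Fin 4) K), G.card ≤ 3 ∧
      J = Ideal.span (G : Set (MvPolynomial (Fin 4) K))) ∧ ∃ p ∈ J, p ≠ 0 := by
  classical
  have hne : c ≠ a + b := by omega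
  have b1 : Bad a b c 1 0 0 1 := ⟨0, 1, 1, 0, by omega, by omega, by omega, by omega⟩
  have hex : ∃ m, ∃ n, Bad a b c n 0 m 0 := by
    obtain ⟨d, hd⟩ := Nat.exists_eq_add_of_lt hab
    obtain ⟨e, he⟩ := Nat.exists_eq_add_of_lt h
    refine ⟨a, d + 1, 0, b, 0, 0, by omega, ?_, ?_, ?_⟩
    · subst he hd
      nlinarith
    · simp [mul_comm]
    · left
      subst he hd
      nlinarith
  set m := Nat.find hex with hmdef
  have hexn : ∃ n, Bad a b c n 0 m 0 := Nat.find_spec hex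
  have nm : ∀ m' < m, ∀ n', ¬ Bad a b c n' 0 m' 0 := by
    intro m' hm' n' hb
    exact Nat.find_min hex hm' ⟨n', hb⟩
  clear_value m
  clear hmdef hex
  set n := Nat.find hexn with hndef
  have bn : Bad a b c n 0 m 0 := Nat.find_spec hexn
  have nn : ∀ n' < n, ¬ Bad a b c n' 0 m 0 := fun n' hn' => Nat.find_min hexn hn'
  clear_value n
  clear hndef hexn
  have bn' : Bad a b c 0 m 0 n := bn.mirror
  have m1 : 0 < m := by
    rcases Nat.eq_zero_or_pos m with h0 | h0
    · subst h0
      exfalso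
      obtain ⟨p, q, r, s, h1, h2, h3, h4⟩ := bn
      have hq : q = 0 := by
        by_contra hq
        have : 0 < a * q := Nat.mul_pos ha (by omega)
        omega
      have hr : r = 0 := by
        by_contra hq
        have : 0 < b * r := Nat.mul_pos (by omega) (by omega)
        omega
      have hs : s = 0 := by
        by_contra hq
        have : 0 < c * s := Nat.mul_pos (by omega) (by omega)
        omega
      subst hq hr hs
      have : p = n := by omega
      subst this
      omega
    · exact h0
  have n1 : 0 < n := by
    rcases Nat.eq_zero_or_pos n with h0 | h0
    · subst h0
      exact absurd bn (not_bad_mid h 0 m)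
    · exact h0
  have hc0 : (0 : ℤ) < c := by omega
  have hba : (0 : ℤ) < b - a := by omega
  have bbin : ∀ i t : ℕ, 0 < i → 0 < t → (c : ℤ) * i = (b - a) * t →
      Bad a b c (i + 1) 0 (t - 1) 0 := by
    intro i t hi ht he
    obtain ⟨i, rfl⟩ := Nat.exists_eq_add_of_lt hi
    obtain ⟨t, rfl⟩ := Nat.exists_eq_add_of_lt ht
    refine ⟨0, t + 2, 0, i, by omega, ?_, ?_, ?_⟩
    · simp only [show 0 + t + 1 - 1 = t by omega]
      zify at h hab ⊢
      push_cast at he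
      nlinarith
    · simp only [show 0 + t + 1 - 1 = t by omega]
      zify at h hab ⊢
      push_cast at he
      nlinarith
    · left
      simp only [show 0 + t + 1 - 1 = t by omega]
      zify at h hab ⊢
      push_cast at he
      nlinarith
  -- signs
  have pos_of : ∀ x y : ℤ, (c : ℤ) * x = (b - a) * y → 0 < y → 0 < x := by
    intro x y hxy hy
    have := mul_pos hba hy
    rw [← hxy] at this
    exact (mul_pos_iff_of_pos_left hc0).1 this
  have zero_of : ∀ x y : ℤ, (c : ℤ) * x = (b - a) * y → x = 0 → y = 0 := by
    intro x y hxy hx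
    rw [hx, mul_zero] at hxy
    rcases mul_eq_zero.1 hxy.symm with hh | hh
    · omega
    · exact hh
  have zero_of' : ∀ x y : ℤ, (c : ℤ) * x = (b - a) * y → y = 0 → x = 0 := by
    intro x y hxy hx
    rw [hx, mul_zero] at hxy
    rcases mul_eq_zero.1 hxy with hh | hh
    · omega
    · exact hh
  have z1 : ∀ f ∈ J, ∀ i k, ¬ Bad a b c i 0 k 0 → k ≤ m → coeff (E i 0 k 0) f = 0 := by
    intro f hf i k hb hk
    refine hF.coef_zero hf hb ?_
    intro p q r s he
    obtain ⟨e1, e2, e3⟩ := he.main hne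
    rcases Nat.eq_zero_or_pos q with hq | hq
    · have := zero_of' _ _ e3 (by omega)
      omega
    · exfalso
      have e4 : (c : ℤ) * (i - p) = (b - a) * q := by
        push_cast at e3
        linear_combination -e3
      have hp := pos_of _ _ e4 (by omega)
      refine nm (q - 1) (by omega) _ (bbin (i - p) q (by omega) hq ?_)
      rw [Nat.cast_sub (by omega)]
      exact e4
  have z2 : ∀ f ∈ J, ∀ i k, ¬ Bad a b c i 0 k 0 → k ≤ m → coeff (E 0 k 0 i) f = 0 := by
    intro f hf i k hb hk
    refine hF.coef_zero hf (fun hh => hb hh.mirror) ?_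
    intro p q r s he
    obtain ⟨e1, e2, e3⟩ := he.main hne
    rcases Nat.eq_or_lt_of_le (show q ≤ k by omega) with hq | hq
    · have := zero_of' _ _ e3 (by omega)
      omega
    · exfalso
      have hp := pos_of _ _ e3 (by omega)
      refine nm (k - q - 1) (by omega) _ (bbin p (k - q) (by omega) (by omega) ?_)
      rw [Nat.cast_sub (by omega)]
      push_cast at e3
      linear_combination e3
  set M : Fin 3 → (Fin 4 →₀ ℕ) := ![E 1 0 0 1, E n 0 m 0, E 0 m 0 n] with hM
  have hmJ : ∀ t, monomial (M t) (1 : K) ∈ J := by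
    intro t
    fin_cases t
    · exact hF.bad _ _ _ _ b1
    · exact hF.bad _ _ _ _ bn
    · exact hF.bad _ _ _ _ bn'
  have key1 : CM J → J = Ideal.span ((fun s => monomial s (1 : K)) '' Set.range M) := by
    intro hCM
    have cl1 : ∀ i j k, 1 ≤ i → Bad a b c i j k 0 → Bad a b c i 0 k 0 := by
      intro i j k hi hb
      have s1 : Bad a b c (i + n) 0 k 0 := hF.h00 hCM (i + n) 0 k 0 j m 1
        (hb.mono (by omega) (by omega) (by omega) (by omega))
        (bn.mono (by omega) (by omega) (by omega) (by omega))
        (b1.mono (by omega) (by omega) (by omega) (by omega))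
      exact hF.h02 hCM i 0 k 0 n j 1 s1
        (hb.mono (by omega) (by omega) (by omega) (by omega))
        (b1.mono (by omega) (by omega) (by omega) (by omega))
    have cl2 : ∀ i j k, 1 ≤ i → Bad a b c i j k 0 → n ≤ i ∧ m ≤ k := by
      intro i j k hi hb
      have hb := cl1 i j k hi hb
      have hk : m ≤ k := by
        by_contra hh
        exact nm k (by omega) _ hb
      refine ⟨?_, hk⟩
      by_contra hh
      refine nn i (by omega) (hF.h01 hCM i 0 m 0 (n - i) (k - m) 1 ?_ ?_ ?_)
      · exact bn.mono (by omega) (by omega) (by omega) (by omega)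
      · exact hb.mono (by omega) (by omega) (by omega) (by omega)
      · exact b1.mono (by omega) (by omega) (by omega) (by omega)
    have cl3 : ∀ i t : ℕ, 0 < i → 0 < t → (c : ℤ) * i = (b - a) * t →
        Bad a b c i 0 (t - 1) 0 := by
      intro i t hi ht he
      have bt := bbin i t hi ht he
      have bt' := bt.mirror
      have b2 : Bad a b c i 0 (t - 1) (0 + 1) :=
        b1.mono (by omega) (by omega) (by omega) (by omega)
      have b2' : Bad a b c (0 + 1) (t - 1) 0 i :=
        b1.mono (by omega) (by omega) (by omega) (by omega)
      have hq : mon K i 0 (t - 1 + 1) 0 - mon K 0 (t - 1 + 1) 0 i ∈ J := by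
        refine hF.eqv _ _ _ _ _ _ _ _ (Eqv.of (by omega) (by omega) ?_)
        rw [show t - 1 + 1 = t by omega]
        push_cast
        linear_combination -he
      have bb : ∀ i j k l, Bad a b c i j k l → -mon K i j k l ∈ J := fun i j k l hb =>
        J.neg_mem (hF.bad i j k l hb)
      obtain ⟨v, hv⟩ := hCM.lift ![1, 1, 1, 1] ![0, mon K i 0 (t - 1) 0, mon K 0 (t - 1) 0 i, 0] (by
        intro x y
        fin_cases x <;> fin_cases y <;>
          simp only [Fin.zero_eta, Fin.mk_one, Fin.reduceFinMk, Matrix.cons_val, mul_zero,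
            sub_self, zero_sub, sub_zero, J.zero_mem, X_pow_mul_mon_0, X_pow_mul_mon_1,
            X_pow_mul_mon_2, X_pow_mul_mon_3]
        · exact hF.bad _ _ _ _ bt
        · exact hF.bad _ _ _ _ b2'
        · exact bb _ _ _ _ bt
        · simpa using J.neg_mem hq
        · exact bb _ _ _ _ b2
        · exact bb _ _ _ _ b2'
        · exact hq
        · exact bb _ _ _ _ bt'
        · exact hF.bad _ _ _ _ b2
        · exact hF.bad _ _ _ _ bt')
      by_contra hnb
      have h0 := hF.coef_zero (hv 1) hnb (by
        intro p q r s hE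
        have hnb' : ¬ Bad a b c p q r s := fun hh => hnb (hE.bad hh)
        obtain ⟨e1, e2, e3⟩ := hE.main hne
        rcases Nat.eq_or_lt_of_le (show p ≤ i by omega) with hp | hp
        · have := zero_of _ _ e3 (by omega)
          omega
        · exfalso
          have hp0 : p = 0 := by
            by_contra hh
            exact hnb' (b1.mono (by omega) (by omega) (by omega) (by omega))
          subst hp0
          have e4 : ((b : ℤ) - a) * (t - q) = 0 := by
            push_cast at e3
            linear_combination -he - e3
          rcases mul_eq_zero.1 e4 with hh | hh <;> omega)
      rw [coeff_sub, coeff_X_pow_mul_zero] at h0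
      · simp at h0
      · simp
    have nodiv : ∀ i j k l, ¬ (1 ≤ i ∧ 1 ≤ l) → ¬ (n ≤ i ∧ m ≤ k) → ¬ (m ≤ j ∧ n ≤ l) →
        ¬ Bad a b c i j k l := by
      intro i j k l h0 h1 h2 hb
      by_cases hi : 1 ≤ i
      · have : l = 0 := by omega
        subst this
        exact h1 (cl2 i j k hi hb)
      · have : i = 0 := by omega
        subst this
        by_cases hl : 1 ≤ l
        · exact h2 (cl2 l k j hl hb.mirror).symm
        · have : l = 0 := by omega
          subst this
          exact not_bad_mid h j k hb
    refine eq_span_monomial M hmJ ?_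
    intro f hf α hα
    by_contra hno
    push Not at hno
    rw [← E_eta α] at hno hα
    generalize α 0 = i at *
    generalize α 1 = j at *
    generalize α 2 = k at *
    generalize α 3 = l at *
    have n0 := hno 0
    have n1 := hno 1
    have n2 := hno 2
    simp [hM, E_le] at n0 n1 n2
    have nbα : ¬ Bad a b c i j k l := nodiv i j k l (by omega) (by omega) (by omega)
    obtain ⟨p, q, r, s, h1, h2, h3⟩ := hF.coef f hf i j k l nbα hα
    have nbβ : ¬ Bad a b c p q r s := fun hb => nbα (h1.bad hb)
    have m0 : ¬ (1 ≤ p ∧ 1 ≤ s) := fun hh =>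
      nbβ (b1.mono (by omega) (by omega) (by omega) (by omega))
    obtain ⟨e1, e2, e3⟩ := h1.main hne
    rcases lt_trichotomy p i with hlt | heq | hlt
    · -- l = 0, p = 0, s = i
      have hl : l = 0 := by omega
      have hp : p = 0 := by omega
      subst hl hp
      have hjq : j < q := by
        by_contra hh
        rcases Nat.eq_or_lt_of_le (show q ≤ j by omega) with hq | hq
        · have := zero_of' _ _ e3 (by omega)
          omega
        · have := pos_of _ _ e3 (by omega)
          omega
      refine nbα ((cl3 i (q - j) (by omega) (by omega) ?_).mono le_rfl (by omega) (by omega)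
        (by omega))
      push_cast [hjq.le] at e3 ⊢
      linear_combination -e3
    · have := zero_of _ _ e3 (by omega)
      exact h2 (by omega)
    · have hi : i = 0 := by omega
      have hs : s = 0 := by omega
      subst hi hs
      have hqj : q < j := by
        by_contra hh
        rcases Nat.eq_or_lt_of_le (show j ≤ q by omega) with hq | hq
        · have := zero_of' _ _ e3 (by omega)
          omega
        · have := pos_of (-(p - (0 : ℕ))) (-(j - q)) (by linear_combination -e3) (by omega)
          omega
      refine nbα ((cl3 l (j - q) (by omega) (by omega) ?_).mirror.mono (by omega) (by omega)
        (by omega) (by omega))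
      have : l = p := by omega
      subst this
      push_cast [hqj.le] at e3 ⊢
      linear_combination e3
  have key2 : (∃ G : Finset (MvPolynomial (Fin 4) K), G.card ≤ 3 ∧
      J = Ideal.span (G : Set (MvPolynomial (Fin 4) K))) →
      J = Ideal.span ((fun s => monomial s (1 : K)) '' Set.range M) := by
    intro hb
    refine gens_three hb M ?_ hmJ ?_
    · intro x y
      fin_cases x <;> fin_cases y <;> simp [hM, E_inj] <;> omega
    · intro t f hf β hle hneq
      rw [← E_eta β] at hle hneq ⊢
      generalize β 0 = i at *
      generalize β 1 = j at *
      generalize β 2 = k at *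
      generalize β 3 = l at *
      have nbb : ∀ i k, k ≤ m → (k = m → i < n) → ¬ Bad a b c i 0 k 0 := by
        intro i k hk hi
        rcases Nat.eq_or_lt_of_le hk with hk | hk
        · subst hk
          exact nn i (hi rfl)
        · exact nm k hk i
      fin_cases t
      all_goals
        simp [hM, E_le, E_inj] at hle hneq
      · obtain ⟨hi, rfl, rfl, hl⟩ := hle
        by_cases hl0 : l = 0
        · subst hl0
          exact z1 f hf i 0 (nbb i 0 (by omega) (by omega)) (by omega)
        · have : i = 0 := by omega
          subst this
          exact z2 f hf l 0 (nbb l 0 (by omega) (by omega)) (by omega)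
      · obtain ⟨hi, rfl, hk, rfl⟩ := hle
        exact z1 f hf i k (nbb i k hk (by omega)) hk
      · obtain ⟨rfl, hj, rfl, hl⟩ := hle
        exact z2 f hf l j (nbb l j hj (by omega)) hj
  have key3 : J = Ideal.span ((fun s => monomial s (1 : K)) '' Set.range M) → CM J := by
    intro hJ
    refine CM_three n1 m1 ?_
    rw [hJ]
    congr 1
    have e1 := mon_eq (K := K) 1 0 0 1
    have e2 := mon_eq (K := K) n 0 m 0
    have e3 := mon_eq (K := K) 0 m 0 n
    simp only [pow_zero, pow_one, mul_one, one_mul] at e1 e2 e3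
    rw [← e1, ← e2, ← e3, hM]
    simp only [Matrix.range_cons, Matrix.range_empty, Set.union_empty, Set.image_union,
      Set.image_singleton, mon]
    rfl
  refine ⟨⟨fun hh => gens_of_span (key1 hh), fun hh => key3 (key2 hh)⟩,
    mon K 1 0 0 1, hF.bad _ _ _ _ b1, by simp [mon]⟩

end
end FC

namespace FC
section
variable {K : Type*} [Field K] {a b c : ℕ} {J : Ideal (MvPolynomial (Fin 4) K)}

/-! ### The case `c = a + b` -/

lemma not_bad_B (i j k l : ℕ) : ¬ Bad a b (a + b) i j k l := by
  rintro ⟨p, q, r, s, h1, h2, h3, h4⟩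
  have e : (a + b) * (p + q + r + s) = (a + b) * (i + j + k + l) := by rw [h1]
  rcases h4 with h4 | h4 <;> nlinarith

lemma Eqv.mainB {i j k l p q r s : ℕ} (hb : 0 < b) (hco : Nat.Coprime a b)
    (h : Eqv a b (a + b) i j k l p q r s) :
    ∃ t : ℤ, (i + j - p - q : ℤ) = a * t ∧ (p + r - i - k : ℤ) = b * t := by
  obtain ⟨e1, e2, e3⟩ := h
  zify at e1 e2
  have h1 : (a : ℤ) * (p + r - i - k) = b * (i + j - p - q) := by linear_combination e2
  have h2 : (b : ℤ) ∣ (p + r - i - k) := by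
    refine IsCoprime.dvd_of_dvd_mul_left (x := (b : ℤ)) (y := (a : ℤ)) ?_ ⟨_, h1⟩
    exact (Nat.isCoprime_iff_coprime.2 hco).symm
  obtain ⟨t, ht⟩ := h2
  refine ⟨t, ?_, ht⟩
  have hb' : (b : ℤ) ≠ 0 := by omega
  apply mul_left_cancel₀ hb'
  rw [← h1, ht]; ring

lemma Eqv.ofB {i j k l p q r s : ℕ} (h1 : p + q + r + s = i + j + k + l)
    (h2 : (a + b) * p + b * q + a * r = (a + b) * i + b * j + a * k) :
    Eqv a b (a + b) i j k l p q r s := by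
  refine ⟨h1, h2, ?_⟩
  have e : (a + b) * (p + q + r + s) = (a + b) * (i + j + k + l) := by rw [h1]
  linarith

lemma uniqB {i j k l p q r s : ℕ} (hb : 0 < b) (hco : Nat.Coprime a b)
    (h : Eqv a b (a + b) i j k l p q r s) (hd : i + j + k + l < b)
    (h0 : (i = 0 ∧ k = 0) ∨ (j = 0 ∧ l = 0)) : p = i ∧ q = j ∧ r = k ∧ s = l := by
  obtain ⟨t, e1, e2⟩ := h.mainB hb hco
  have hdeg := h.1
  have t0 : t = 0 := by
    rcases lt_trichotomy t 0 with ht | ht | ht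
    · have : (b : ℤ) * t ≤ b * (-1) := mul_le_mul_of_nonneg_left (by omega) (by omega)
      omega
    · exact ht
    · have : (b : ℤ) * 1 ≤ b * t := mul_le_mul_of_nonneg_left (by omega) (by omega)
      omega
  subst t0
  simp only [mul_zero] at e1 e2
  omega

lemma caseB_notCM (ha : 0 < a) (hab : a + 2 ≤ b) (hco : Nat.Coprime a b)
    (hF : FI a b (a + b) J) : ¬ CM J := by
  intro hCM
  obtain ⟨d, rfl⟩ := Nat.exists_eq_add_of_le hab
  have E1 : ∀ i j k l p q r s : ℕ, p + q + r + s = i + j + k + l →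
    (a + (a + 2 + d)) * p + (a + 2 + d) * q + a * r =
      (a + (a + 2 + d)) * i + (a + 2 + d) * j + a * k →
    mon K i j k l - mon K p q r s ∈ J := fun i j k l p q r s h1 h2 =>
      hF.eqv _ _ _ _ _ _ _ _ (Eqv.ofB h1 h2)
  obtain ⟨v, hv⟩ := hCM.lift ![1, a + 2 + d, a + 2 + d, d + 1]
    ![mon K 0 (a + 1) 0 0, mon K (d + 1) (a + 1) a 0, mon K 0 a (a + d + 1) 1,
      mon K 0 0 (a + d + 1) 0] (by
        intro x y
        fin_cases x <;> fin_cases y <;>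
          simp only [Fin.zero_eta, Fin.mk_one, Fin.reduceFinMk, Matrix.cons_val, mul_zero,
            sub_self, zero_sub, sub_zero, J.zero_mem, X_pow_mul_mon_0, X_pow_mul_mon_1,
            X_pow_mul_mon_2, X_pow_mul_mon_3] <;>
          exact E1 _ _ _ _ _ _ _ _ (by ring) (by ring))
  have hv0 := hv 0
  simp only [Matrix.cons_val_zero, pow_one] at hv0
  have hc0 : coeff (E 0 (a + 1) 0 0) (X 0 ^ 1 * v - mon K 0 (a + 1) 0 0) ≠ 0 := by
    rw [coeff_sub, coeff_X_pow_mul_zero]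
    · simp
    · simp
  rw [pow_one] at hc0
  obtain ⟨p, q, r, s, h1, h2, h3⟩ := hF.coef _ hv0 0 (a + 1) 0 0 (not_bad_B _ _ _ _) hc0
  have hp : 1 ≤ p := by
    by_contra hp
    have hp0 : p = 0 := by omega
    subst hp0
    rw [← pow_one (X 0 : MvPolynomial (Fin 4) K), coeff_sub, coeff_X_pow_mul_zero, coeff_mon,
      if_neg] at h3
    · simp at h3
    · omega
    · simp
  obtain ⟨t, e1, e2⟩ := h1.mainB (by omega) hco
  have hdeg := h1.1
  have ht : 0 < t := by
    by_contra ht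
    have : ((a + 2 + d : ℕ) : ℤ) * t ≤ 0 :=
      mul_nonpos_of_nonneg_of_nonpos (by omega) (by omega)
    omega
  have : ((a + 2 + d : ℕ) : ℤ) * 1 ≤ ((a + 2 + d : ℕ) : ℤ) * t :=
    mul_le_mul_of_nonneg_left (by omega) (by omega)
  omega

lemma caseB_notGen (ha : 0 < a) (hab : a + 2 ≤ b) (hco : Nat.Coprime a b)
    (hF : FI a b (a + b) J) : ¬ ∃ G : Finset (MvPolynomial (Fin 4) K), G.card ≤ 3 ∧
      J = Ideal.span (G : Set (MvPolynomial (Fin 4) K)) := by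
  intro hG
  obtain ⟨d, rfl⟩ := Nat.exists_eq_add_of_le hab
  have E1 : ∀ i j k l p q r s : ℕ, p + q + r + s = i + j + k + l →
    (a + (a + 2 + d)) * p + (a + 2 + d) * q + a * r =
      (a + (a + 2 + d)) * i + (a + 2 + d) * j + a * k →
    mon K i j k l - mon K p q r s ∈ J := fun i j k l p q r s h1 h2 =>
      hF.eqv _ _ _ _ _ _ _ _ (Eqv.ofB h1 h2)
  refine gens_four hG
    ![mon K 1 0 0 1 - mon K 0 1 1 0, mon K 0 (a + 2 + d) 0 0 - mon K (d + 2) 0 a 0,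
      mon K 0 0 (a + 2 + d) 0 - mon K 0 a 0 (d + 2),
      mon K 0 (a + 1) 0 (d + 1) - mon K 1 0 (a + d + 1) 0]
    ![E 1 0 0 1, E 0 (a + 2 + d) 0 0, E 0 0 (a + 2 + d) 0, E 0 (a + 1) 0 (d + 1)] ?_ ?_ ?_
  · intro x
    fin_cases x <;> exact E1 _ _ _ _ _ _ _ _ (by ring) (by ring)
  · intro t f hf β hle hneq
    rw [← E_eta β] at hle hneq ⊢
    generalize β 0 = i at *
    generalize β 1 = j at *
    generalize β 2 = k at *
    generalize β 3 = l at *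
    refine hF.coef_zero hf (not_bad_B _ _ _ _) fun p q r s he => uniqB (by omega) hco he ?_ ?_
    · fin_cases t <;> simp [E_le, E_inj] at hle hneq <;> omega
    · fin_cases t <;> simp [E_le, E_inj] at hle hneq <;> omega
  · clear E1 hF hG hco hab
    intro x y
    fin_cases x <;> fin_cases y <;>
      simp only [Fin.zero_eta, Fin.mk_one, Fin.reduceFinMk, Matrix.cons_val, coeff_sub, coeff_mon,
        Fin.reduceEq, if_false, if_true]
    all_goals
      split_ifs <;> first | (exfalso; omega) | (simp; done) | (exfalso; tauto)

lemma caseB_pos (ha : 0 < a) (hF : FI a (a + 1) (a + (a + 1)) J) :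
    CM J ∧ ∃ G : Finset (MvPolynomial (Fin 4) K), G.card ≤ 3 ∧
      J = Ideal.span (G : Set (MvPolynomial (Fin 4) K)) := by
  classical
  have hco : Nat.Coprime a (a + 1) := by simp
  have E1 : ∀ i j k l p q r s : ℕ, p + q + r + s = i + j + k + l →
    (a + (a + 1)) * p + (a + 1) * q + a * r =
      (a + (a + 1)) * i + (a + 1) * j + a * k →
    mon K i j k l - mon K p q r s ∈ J := fun i j k l p q r s h1 h2 =>
      hF.eqv _ _ _ _ _ _ _ _ (Eqv.ofB h1 h2)
  set g1 : MvPolynomial (Fin 4) K := mon K 1 0 0 1 - mon K 0 1 1 0 with hg1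
  set g2 : MvPolynomial (Fin 4) K := mon K 0 (a + 1) 0 0 - mon K 1 0 a 0 with hg2
  set g3 : MvPolynomial (Fin 4) K := mon K 0 0 (a + 1) 0 - mon K 0 a 0 1 with hg3
  set P : Ideal (MvPolynomial (Fin 4) K) := Ideal.span {g1, g2, g3} with hP
  have p1 : g1 ∈ P := Ideal.subset_span (by simp)
  have p2 : g2 ∈ P := Ideal.subset_span (by simp)
  have p3 : g3 ∈ P := Ideal.subset_span (by simp)
  have hPJ : P ≤ J := by
    rw [hP, Ideal.span_le]
    rintro x hx
    simp only [Set.mem_insert_iff, Set.mem_singleton_iff] at hx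
    rcases hx with rfl | rfl | rfl <;> exact E1 _ _ _ _ _ _ _ _ (by ring) (by ring)
  have red : ∀ N i j k l, j + k = N → ∃ h', mon K i j k l - h' ∈ P ∧ Nrm (a + 1) h' := by
    intro N
    induction N using Nat.strong_induction_on with
    | _ N ih =>
    intro i j k l hN
    have step : ∀ i' j' k' l', j' + k' < N → mon K i j k l - mon K i' j' k' l' ∈ P →
        ∃ h', mon K i j k l - h' ∈ P ∧ Nrm (a + 1) h' := by
      intro i' j' k' l' hlt hmem
      obtain ⟨h', e1, e2⟩ := ih _ hlt i' j' k' l' rfl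
      refine ⟨h', ?_, e2⟩
      have := P.add_mem hmem e1
      convert this using 1
      ring
    by_cases c1 : 1 ≤ j ∧ 1 ≤ k
    · obtain ⟨j, rfl⟩ := Nat.exists_eq_add_of_le c1.1
      obtain ⟨k, rfl⟩ := Nat.exists_eq_add_of_le c1.2
      refine step (i + 1) j k (l + 1) (by omega) ?_
      have := P.mul_mem_left (-mon K i j k l) p1
      convert this using 1
      simp only [hg1, mon_eq]; ring
    · by_cases c2 : a + 1 ≤ j
      · obtain ⟨j, rfl⟩ := Nat.exists_eq_add_of_le c2
        have : k = 0 := by omega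
        subst this
        refine step (i + 1) j a l (by omega) ?_
        have := P.mul_mem_left (mon K i j 0 l) p2
        convert this using 1
        simp only [hg2, mon_eq]; ring
      · by_cases c3 : a + 1 ≤ k
        · obtain ⟨k, rfl⟩ := Nat.exists_eq_add_of_le c3
          have : j = 0 := by omega
          subst this
          refine step i a k (l + 1) (by omega) ?_
          have := P.mul_mem_left (mon K i 0 k l) p3
          convert this using 1
          simp only [hg3, mon_eq]; ring
        · exact ⟨mon K i j k l, by simp, Nrm.mon (by omega) (by omega) (by omega)⟩
  have h1 := exists_Nrm (J := P) (r := a + 1) (fun i j k l => red _ i j k l rfl)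
  have h2 : ∀ f ∈ J, Nrm (a + 1) f → f = 0 := by
    intro f hf hN
    ext α
    rw [coeff_zero]
    by_contra hα
    obtain ⟨n0, n1, n2⟩ := hN α hα
    rw [← E_eta α] at hα
    generalize α 0 = i at *
    generalize α 1 = j at *
    generalize α 2 = k at *
    generalize α 3 = l at *
    obtain ⟨p, q, r, s, e1, e2, e3⟩ := hF.coef f hf i j k l (not_bad_B _ _ _ _) hα
    obtain ⟨m0, m1, m2⟩ := hN _ e3
    simp only [E_1, E_2] at m0 m1 m2
    obtain ⟨t, f1, f2⟩ := e1.mainB (by omega) hco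
    have hdeg := e1.1
    have f3 : ((j : ℤ) - k) - (q - r) = (2 * a + 1) * t := by
      push_cast at f2
      linear_combination f1 + f2
    have t0 : t = 0 := by
      rcases lt_trichotomy t 0 with ht | ht | ht
      · have : (2 * a + 1 : ℤ) * t ≤ (2 * a + 1) * (-1) :=
          mul_le_mul_of_nonneg_left (by omega) (by omega)
        omega
      · exact ht
      · have : (2 * a + 1 : ℤ) * 1 ≤ (2 * a + 1) * t :=
          mul_le_mul_of_nonneg_left (by omega) (by omega)
        omega
    subst t0
    simp only [mul_zero] at f1 f2
    exact e2 (by omega)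
  refine ⟨CM_of_Nrm (r := a + 1) (by omega) (fun f => ?_) h2, {g1, g2, g3}, Finset.card_le_three, ?_⟩
  · obtain ⟨h', e1, e2⟩ := h1 f
    exact ⟨h', hPJ e1, e2⟩
  · have : J = P := by
      refine le_antisymm (fun f hf => ?_) hPJ
      obtain ⟨h', e1, e2⟩ := h1 f
      have e3 : h' ∈ J := by
        have := J.sub_mem hf (hPJ e1)
        simpa using this
      have e4 := h2 h' e3 e2
      simpa [e4] using e1
    rw [this, hP]
    simp

lemma caseB (ha : 0 < a) (hab : a < b) (hco : Nat.Coprime a b) (hF : FI a b (a + b) J) :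
    (CM J ↔ ∃ G : Finset (MvPolynomial (Fin 4) K), G.card ≤ 3 ∧
      J = Ideal.span (G : Set (MvPolynomial (Fin 4) K))) ∧ ∃ p ∈ J, p ≠ 0 := by
  refine ⟨?_, mon K 1 0 0 1 - mon K 0 1 1 0, hF.eqv _ _ _ _ _ _ _ _
    (Eqv.ofB (by ring) (by ring)), ?_⟩
  · rcases Nat.eq_or_lt_of_le (Nat.succ_le_of_lt hab) with h | h
    · subst h
      have := caseB_pos ha hF
      exact ⟨fun _ => this.2, fun _ => this.1⟩
    · exact ⟨fun hh => absurd hh (caseB_notCM ha h hco hF),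
        fun hh => absurd hh (caseB_notGen ha h hco hF)⟩
  · intro h0
    have := congrArg (coeff (E 1 0 0 1)) h0
    rw [coeff_sub, coeff_mon, coeff_mon] at this
    simp at this

end
end FC

theorem stmt_16 {K : Type*} [Field K] (a b c : ℕ)
    (ha : 0 < a) (hab : a < b) (hbc : b < c)
    (hgcd : Nat.gcd a (Nat.gcd b c) = 1)
    (u : Fin 4 → MvPolynomial (Fin 2) K)
    (hu0 : u 0 = X 0 ^ c) (hu1 : u 1 = X 0 ^ b * X 1 ^ a)
    (hu2 : u 2 = X 0 ^ a * X 1 ^ b) (hu3 : u 3 = X 1 ^ c)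
    (I mm : Ideal (MvPolynomial (Fin 2) K))
    (hI : I = Ideal.span {u 0, u 1, u 2, u 3})
    (hmm : mm = Ideal.span {(X 0 : MvPolynomial (Fin 2) K), X 1})
    (J : Ideal (MvPolynomial (Fin 4) K))
    (hJ : ∀ f : MvPolynomial (Fin 4) K,
      f ∈ J ↔ ∀ d : ℕ, aeval u (homogeneousComponent d f) ∈ mm * I ^ d)
    :
    ((∃ f g : MvPolynomial (Fin 4) K,
        f ∈ Ideal.span {(X 0 : MvPolynomial (Fin 4) K), X 1, X 2, X 3} ∧
        g ∈ Ideal.span {(X 0 : MvPolynomial (Fin 4) K), X 1, X 2, X 3} ∧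
        RingTheory.Sequence.IsRegular (MvPolynomial (Fin 4) K ⧸ J)
          [Ideal.Quotient.mk J f, Ideal.Quotient.mk J g]) ↔
      (∃ G : Finset (MvPolynomial (Fin 4) K), G.card ≤ 3 ∧ J = Ideal.span (G : Set (MvPolynomial (Fin 4) K)))) ∧
    ((∃ G : Finset (MvPolynomial (Fin 4) K), G.card ≤ 3 ∧ J = Ideal.span (G : Set (MvPolynomial (Fin 4) K))) ↔
      (∃ G : Finset (MvPolynomial (Fin 4) K), G.card = 3 ∧ J = Ideal.span (G : Set (MvPolynomial (Fin 4) K)))) := by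
  have hF : FC.FI a b c J := FC.FI_of hu0 hu1 hu2 hu3 hI hmm hJ
  have main : (FC.CM J ↔ ∃ G : Finset (MvPolynomial (Fin 4) K), G.card ≤ 3 ∧
      J = Ideal.span (G : Set (MvPolynomial (Fin 4) K))) ∧ ∃ p ∈ J, p ≠ 0 := by
    rcases lt_trichotomy c (a + b) with h | h | h
    · exact FC.caseA ha hab hbc h hF
    · subst h
      refine FC.caseB ha hab ?_ hF
      have : Nat.gcd a b ∣ Nat.gcd a (Nat.gcd b (a + b)) :=
        Nat.dvd_gcd (Nat.gcd_dvd_left _ _) (Nat.dvd_gcd (Nat.gcd_dvd_right _ _)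
          (Nat.dvd_add (Nat.gcd_dvd_left _ _) (Nat.gcd_dvd_right _ _)))
      rw [hgcd] at this
      exact Nat.dvd_one.1 this
    · exact FC.caseC ha hab h hF
  obtain ⟨h1, p, hp, hp0⟩ := main
  exact ⟨h1, FC.pad hp hp0⟩
end
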